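/- arXiv:2306.10465 — 4 statements merged into one kernel-verified Lean document; each statement's English description precedes it below -/
import Mathlib

section
/- Let n ≥ 1 and m ≥ 1 be integers, let 0 < α_i < n and 1 < p_i < n/α_i for i = 1,…,m, set α = α_1 + ⋯ + α_m, and define q by 1/q = 1/p_1 + ⋯ + 1/p_m − α/n, assuming 1/q < 1. Then there exists a constant C > 0 such that for every x ∈ ℝ^n, every r > 0, and all functions f_i that are locally in L^{p_i}(ℝ^n), one has ‖I_{α,m}(f_1,…,f_m)‖_{L^q(B(x,r))} ≤ C r^{n/q} ∏_{i=1}^m ∫_{2r}^∞ t^{α_i − n/p_i − 1} ‖f_i‖_{L^{p_i}(B(x,t))} dt. -/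
/-!
The kernel of the multilinear operator satisfies
`(∑ |y - w_i|)^(α - mn) ≤ ∏ |y - w_i|^(α_i - n)`, so `|I_{α,m} f|` is pointwise at most the product
of the linear Riesz potentials of the `|f_i|` of orders `α_i` (`enorm_multIFrac_le`). The exponents
`1 / Q_i = 1 / p_i - α_i / n` are positive and add up to `1 / q`, so Hölder's inequality on `B(x,r)`
and the identity `r^(n/q) = ∏ r^(n/Q_i)` reduce the claim to a single potential
(`rieszPot_local_le`).

For one potential of a nonnegative `g`, split `g` at `B(x,2r)`.

* Near part: by the Hardy–Littlewood–Sobolev inequality (`hls`) its `L^Q` norm is at most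
  `C ‖g‖_{L^p(B(x,2r))}`, and this is at most
  `C r^(n/Q) ∫_{2r}^∞ t^(a-n/p-1) ‖g‖_{L^p(B(x,t))} dt`, because the inner norm increases with `t`
  and `a - n/p = -n/Q`.
* Far part: for `y ∈ B(x,r)` and `z ∉ B(x,2r)` one has `|z - y| ≥ |z - x| / 2`. Writing
  `|z - x|^(a-n) = (n-a) ∫_{|z-x|}^∞ t^(a-n-1) dt` and applying Hölder's inequality on `B(x,t)` bounds
  the potential on `B(x,r)` by the tail integral (`rieszPot_far_le`).

The Hardy–Littlewood–Sobolev inequality is proved without maximal functions or interpolation. For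
`‖g‖_p ≤ 1` and every `l > 0`, the potential at `y` is at most `M l` plus the contribution of the
points `z` with `|z - y| < l^(-q/n)` and `g z > l^(q/p)` (`rieszPot_le_local`). Integrating the
latter against `l^(q-2) dl` controls the `q`-th power of the potential, and Tonelli's theorem
evaluates the resulting triple integral as a multiple of `∫ g^p` (`hls_normalized`).
-/

open MeasureTheory Metric ENNReal

/-- The multilinear fractional integral operator `I_{α,m}` on `ℝⁿ`. -/
noncomputable def multIFrac (n m : ℕ) (α : ℝ)
    (f : Fin m → EuclideanSpace ℝ (Fin n) → ℝ) (x : EuclideanSpace ℝ (Fin n)) : ℝ :=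
  ∫ y : Fin m → EuclideanSpace ℝ (Fin n),
    (∏ i, f i (y i)) * (∑ i, dist x (y i)) ^ (α - (m : ℝ) * (n : ℝ))

/-- The `L^p` norm of `f` over the ball `B(x,t)`. -/
noncomputable def ballLpNorm {n : ℕ} (p : ℝ) (f : EuclideanSpace ℝ (Fin n) → ℝ)
    (x : EuclideanSpace ℝ (Fin n)) (t : ℝ) : ℝ≥0∞ :=
  (∫⁻ y in ball x t, ENNReal.ofReal (|f y| ^ p)) ^ (1 / p)

/-! ### Power integrals on the half-line -/

lemma lintegral_Ioi_rpow_neg {u d : ℝ} (hu : 0 < u) (hd : 0 < d) :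
    ∫⁻ t in Set.Ioi d, ENNReal.ofReal (t ^ (-u - 1)) = ENNReal.ofReal (d ^ (-u) / u) := by
  rw [← ofReal_integral_eq_lintegral_ofReal (integrableOn_Ioi_rpow_of_lt (by linarith) hd),
    integral_Ioi_rpow_of_lt (by linarith) hd]
  · congr 1
    rw [show -u - 1 + 1 = -u by ring]
    field_simp
  · filter_upwards [ae_restrict_mem measurableSet_Ioi] with t ht
    exact Real.rpow_nonneg (hd.trans ht).le _

lemma lintegral_Ioo_rpow {s b : ℝ} (hs : 0 < s) (hb : 0 ≤ b) :
    ∫⁻ t in Set.Ioo 0 b, ENNReal.ofReal (t ^ (s - 1)) = ENNReal.ofReal (b ^ s / s) := by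
  have hint : IntegrableOn (fun t : ℝ => t ^ (s - 1)) (Set.Ioc 0 b) := by
    rw [← intervalIntegrable_iff_integrableOn_Ioc_of_le hb]
    exact intervalIntegral.intervalIntegrable_rpow' (by linarith)
  rw [restrict_Ioo_eq_restrict_Ioc, ← ofReal_integral_eq_lintegral_ofReal hint,
    ← intervalIntegral.integral_of_le hb, integral_rpow (Or.inl (by linarith))]
  · simp [Real.zero_rpow hs.ne']
  · filter_upwards [ae_restrict_mem measurableSet_Ioc] with t ht
    exact Real.rpow_nonneg ht.1.le _

lemma measurable_ofReal_rpow (a : ℝ) : Measurable fun t : ℝ => ENNReal.ofReal (t ^ a) := by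
  fun_prop

/-- The identity `∫₀ˣ t^(s-1) dt = x^s / s`, with the upper limit `x = ∞` allowed. -/
lemma lintegral_rpow_lt {s : ℝ} (hs : 0 < s) (x : ℝ≥0∞) :
    ∫⁻ t in {t : ℝ | 0 < t ∧ ENNReal.ofReal t < x}, ENNReal.ofReal (t ^ (s - 1)) =
      x ^ s / ENNReal.ofReal s := by
  by_cases hx : x = ⊤
  · subst hx
    rw [top_rpow_of_pos hs, top_div_of_ne_top ofReal_ne_top]
    refine ENNReal.eq_top_of_forall_nnreal_le fun r => ?_
    calc (r : ℝ≥0∞) = ENNReal.ofReal (((r * s : ℝ) ^ s⁻¹) ^ s / s) := by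
          rw [← Real.rpow_mul (by positivity), inv_mul_cancel₀ hs.ne', Real.rpow_one,
            mul_div_cancel_right₀ _ hs.ne', ofReal_coe_nnreal]
      _ = ∫⁻ t in Set.Ioo 0 ((r * s : ℝ) ^ s⁻¹), ENNReal.ofReal (t ^ (s - 1)) :=
          (lintegral_Ioo_rpow hs (by positivity)).symm
      _ ≤ _ := lintegral_mono_set
          (show Set.Ioo 0 _ ⊆ {t : ℝ | 0 < t ∧ ENNReal.ofReal t < ⊤} from
            fun t ht => ⟨ht.1, ofReal_lt_top⟩)
  · have : {t : ℝ | 0 < t ∧ ENNReal.ofReal t < x} = Set.Ioo 0 x.toReal := by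
      ext t
      simp only [Set.mem_ofPred_eq, Set.mem_Ioo]
      refine and_congr_right fun ht => ?_
      rw [ENNReal.ofReal_lt_iff_lt_toReal ht.le hx]
    rw [this, lintegral_Ioo_rpow hs toReal_nonneg, ofReal_div_of_pos hs,
      ← ofReal_rpow_of_nonneg toReal_nonneg hs.le, ofReal_toReal hx]

/-- The identity `d^(-u) = u ∫_d^∞ t^(-u-1) dt`, also at `d = 0`, where both sides are infinite. -/
lemma rpow_neg_eq_lintegral {u d : ℝ} (hu : 0 < u) (hd : 0 ≤ d) :
    ENNReal.ofReal d ^ (-u) =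
      ENNReal.ofReal u * ∫⁻ t in Set.Ioi d, ENNReal.ofReal (t ^ (-u - 1)) := by
  have key : ∀ d : ℝ, 0 < d → ENNReal.ofReal d ^ (-u) =
      ENNReal.ofReal u * ∫⁻ t in Set.Ioi d, ENNReal.ofReal (t ^ (-u - 1)) := fun d hd => by
    rw [lintegral_Ioi_rpow_neg hu hd, ← ofReal_mul hu.le, mul_div_cancel₀ _ hu.ne',
      ofReal_rpow_of_pos hd]
  rcases hd.eq_or_lt with rfl | hd
  · rw [ofReal_zero, zero_rpow_of_neg (by linarith)]
    refine (ENNReal.eq_top_of_forall_nnreal_le fun r => ?_).symm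
    have hr : (0 : ℝ) < r + 1 := by positivity
    calc (r : ℝ≥0∞) ≤ ENNReal.ofReal (r + 1) := by
          rw [← ofReal_coe_nnreal]; exact ofReal_le_ofReal (by linarith)
      _ = ENNReal.ofReal ((r + 1 : ℝ) ^ (-u⁻¹)) ^ (-u) := by
          rw [ofReal_rpow_of_pos (by positivity), ← Real.rpow_mul hr.le]
          simp [hu.ne']
      _ ≤ _ := by
          rw [key _ (by positivity)]
          gcongr
          exact Real.rpow_nonneg hr.le _
  · exact key d hd

/-! ### Powers of the distance over balls and their complements -/

variable {n : ℕ}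

/-- The integral of `|z - x|^(-u)` against any measure, through the measures of the balls
centred at `x`. -/
lemma lintegral_rpow_neg_eq_ball (μ : Measure (EuclideanSpace ℝ (Fin n))) [SFinite μ] {u : ℝ}
    (hu : 0 < u) (x : EuclideanSpace ℝ (Fin n)) :
    ∫⁻ z, ‖z - x‖ₑ ^ (-u) ∂μ =
      ENNReal.ofReal u *
        ∫⁻ t in Set.Ioi (0 : ℝ), ENNReal.ofReal (t ^ (-u - 1)) * μ (ball x t) := by
  have hmeas : Measurable (Function.uncurry
      fun (z : EuclideanSpace ℝ (Fin n)) (t : ℝ) =>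
        (Set.Ioi ‖z - x‖).indicator (fun t => ENNReal.ofReal (t ^ (-u - 1))) t) := by
    have : (Function.uncurry
      fun (z : EuclideanSpace ℝ (Fin n)) (t : ℝ) =>
        (Set.Ioi ‖z - x‖).indicator (fun t => ENNReal.ofReal (t ^ (-u - 1))) t) =
        {w : EuclideanSpace ℝ (Fin n) × ℝ | ‖w.1 - x‖ < w.2}.indicator
          (fun w => ENNReal.ofReal (w.2 ^ (-u - 1))) := by
      ext ⟨z, t⟩
      simp [Set.indicator]
    rw [this]
    refine Measurable.indicator (by fun_prop) (measurableSet_lt (by fun_prop) (by fun_prop))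
  calc ∫⁻ z, ‖z - x‖ₑ ^ (-u) ∂μ
      = ∫⁻ z, ENNReal.ofReal u * (∫⁻ t in Set.Ioi (0 : ℝ),
          (Set.Ioi ‖z - x‖).indicator (fun t => ENNReal.ofReal (t ^ (-u - 1))) t) ∂μ := by
        refine lintegral_congr fun z => ?_
        rw [← ofReal_norm, rpow_neg_eq_lintegral hu (norm_nonneg _),
          setLIntegral_indicator measurableSet_Ioi,
          Set.inter_eq_left.2 (Set.Ioi_subset_Ioi (norm_nonneg _))]
    _ = _ := by
        rw [lintegral_const_mul' _ _ ofReal_ne_top, lintegral_lintegral_swap hmeas.aemeasurable]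
        congr 1
        refine lintegral_congr fun t => ?_
        rw [← setLIntegral_const, ← lintegral_indicator measurableSet_ball]
        refine lintegral_congr fun z => ?_
        simp [Set.indicator, mem_ball, dist_eq_norm]

lemma volume_ball_eq (hn : 1 ≤ n) (x : EuclideanSpace ℝ (Fin n)) {t : ℝ} (ht : 0 < t) :
    volume (ball x t) =
      ENNReal.ofReal ((volume (ball (0 : EuclideanSpace ℝ (Fin n)) 1)).toReal * t ^ (n : ℝ)) := by
  have : Nonempty (Fin n) := ⟨⟨0, hn⟩⟩
  rw [Measure.addHaar_ball _ _ ht.le, ofReal_mul toReal_nonneg, ofReal_toReal measure_ball_lt_top.ne,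
    mul_comm, finrank_euclideanSpace_fin, Real.rpow_natCast]

lemma ball_volume_pos : 0 < (volume (ball (0 : EuclideanSpace ℝ (Fin n)) 1)).toReal :=
  ENNReal.toReal_pos (measure_ball_pos _ _ one_pos).ne' measure_ball_lt_top.ne

/-- `|z - x|^(-u)` with `u > n` is integrable at infinity, with the natural scaling in the radius. -/
lemma exists_far_bound (hn : 1 ≤ n) {u : ℝ} (hu : (n : ℝ) < u) :
    ∃ A > (0 : ℝ), ∀ δ > (0 : ℝ), ∀ x : EuclideanSpace ℝ (Fin n),
      ∫⁻ z in (ball x δ)ᶜ, ‖z - x‖ₑ ^ (-u) ≤ ENNReal.ofReal (A * δ ^ ((n : ℝ) - u)) := by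
  set c := (volume (ball (0 : EuclideanSpace ℝ (Fin n)) 1)).toReal with hc
  have hc0 : 0 < c := ball_volume_pos
  have hn0 : (0 : ℝ) < n := by exact_mod_cast hn
  have hu0 : 0 < u := hn0.trans hu
  refine ⟨u * c / (u - n), by have := sub_pos.2 hu; positivity, fun δ hδ x => ?_⟩
  rw [lintegral_rpow_neg_eq_ball _ hu0]
  calc _ ≤ ENNReal.ofReal u * ∫⁻ t in Set.Ioi δ,
        ENNReal.ofReal c * ENNReal.ofReal (t ^ (-(u - n) - 1)) := by
        refine mul_le_mul_right ?_ _
        rw [← lintegral_indicator measurableSet_Ioi, ← lintegral_indicator measurableSet_Ioi]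
        refine lintegral_mono fun t => ?_
        by_cases htδ : δ < t
        · have ht : 0 < t := hδ.trans htδ
          simp only [Set.indicator, Set.mem_Ioi, htδ, ht, if_true]
          calc _ ≤ ENNReal.ofReal (t ^ (-u - 1)) * volume (ball x t) := by
                exact mul_le_mul_right (Measure.restrict_apply_le _ _) _
            _ = _ := by
                rw [volume_ball_eq hn x ht, ← hc, ← ofReal_mul (by positivity),
                  ← ofReal_mul (by positivity), mul_left_comm, ← Real.rpow_add ht]
                congr 3; ring
        · have : (volume.restrict (ball x δ)ᶜ) (ball x t) = 0 := by
            rw [Measure.restrict_apply measurableSet_ball, ← Set.sdiff_eq,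
              Set.sdiff_eq_empty.2 (ball_subset_ball (not_lt.1 htδ)), measure_empty]
          simp [Set.indicator, this]
    _ = _ := by
        rw [lintegral_const_mul' _ _ ofReal_ne_top,
          lintegral_Ioi_rpow_neg (sub_pos.2 hu) hδ, ← ofReal_mul hc0.le, ← ofReal_mul hu0.le]
        congr 1
        rw [neg_sub]; ring

/-- `|z - x|^(-s)` with `0 < s < n` is locally integrable, with the natural scaling in the radius. -/
lemma exists_near_bound (hn : 1 ≤ n) {s : ℝ} (hs : 0 < s) (hsn : s < n) :
    ∃ B > (0 : ℝ), ∀ δ > (0 : ℝ), ∀ x : EuclideanSpace ℝ (Fin n),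
      ∫⁻ z in ball x δ, ‖z - x‖ₑ ^ (-s) ≤ ENNReal.ofReal (B * δ ^ ((n : ℝ) - s)) := by
  set c := (volume (ball (0 : EuclideanSpace ℝ (Fin n)) 1)).toReal with hc
  have hc0 : 0 < c := ball_volume_pos
  have hn0 : (0 : ℝ) < n := by exact_mod_cast hn
  have hsn' : 0 < (n : ℝ) - s := sub_pos.2 hsn
  refine ⟨s * (c / (n - s) + c / s), by positivity, fun δ hδ x => ?_⟩
  rw [lintegral_rpow_neg_eq_ball _ hs]
  have h1 : ∫⁻ t in Set.Ioo 0 δ, ENNReal.ofReal (t ^ (-s - 1)) *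
      (volume.restrict (ball x δ)) (ball x t) ≤ ENNReal.ofReal (c / (n - s) * δ ^ ((n : ℝ) - s)) := by
    calc _ ≤ ∫⁻ t in Set.Ioo 0 δ, ENNReal.ofReal c * ENNReal.ofReal (t ^ ((n : ℝ) - s - 1)) := by
          refine setLIntegral_mono' measurableSet_Ioo fun t ht => ?_
          calc _ ≤ ENNReal.ofReal (t ^ (-s - 1)) * volume (ball x t) := by
                exact mul_le_mul_right (Measure.restrict_apply_le _ _) _
            _ = _ := by
                have ht := ht.1
                rw [volume_ball_eq hn x ht, ← hc, ← ofReal_mul (by positivity),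
                  ← ofReal_mul (by positivity), mul_left_comm, ← Real.rpow_add ht]
                congr 3; ring
      _ = _ := by
          rw [lintegral_const_mul' _ _ ofReal_ne_top, lintegral_Ioo_rpow hsn' hδ.le,
            ← ofReal_mul hc0.le]
          congr 1; ring
  have h2 : ∫⁻ t in Set.Ioi δ, ENNReal.ofReal (t ^ (-s - 1)) *
      (volume.restrict (ball x δ)) (ball x t) ≤ ENNReal.ofReal (c / s * δ ^ ((n : ℝ) - s)) := by
    calc _ ≤ ∫⁻ t in Set.Ioi δ, ENNReal.ofReal (t ^ (-s - 1)) * volume (ball x δ) := by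
          refine lintegral_mono fun t => mul_le_mul_right ?_ _
          exact (measure_mono (Set.subset_univ _)).trans (by simp)
      _ = _ := by
          rw [lintegral_mul_const' _ _ measure_ball_lt_top.ne, lintegral_Ioi_rpow_neg hs hδ,
            volume_ball_eq hn x hδ, ← hc, ← ofReal_mul (by positivity)]
          congr 1
          rw [sub_eq_add_neg, Real.rpow_add hδ]; ring
  calc _ ≤ ENNReal.ofReal s * (ENNReal.ofReal (c / (n - s) * δ ^ ((n : ℝ) - s)) +
        ENNReal.ofReal (c / s * δ ^ ((n : ℝ) - s))) := by
        gcongr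
        rw [← Set.Ioc_union_Ioi_eq_Ioi hδ.le]
        refine (lintegral_union_le _ _ _).trans (add_le_add ?_ h2)
        rwa [← restrict_Ioo_eq_restrict_Ioc]
    _ = _ := by
        rw [← ofReal_add (by positivity) (by positivity), ← ofReal_mul hs.le]
        congr 1; ring

/-! ### Riesz potentials and the Hardy–Littlewood–Sobolev inequality -/

lemma measurableSet_and {X : Type*} [MeasurableSpace X] {P Q : X → Prop}
    (hP : MeasurableSet {x | P x}) (hQ : MeasurableSet {x | Q x}) :
    MeasurableSet {x | P x ∧ Q x} := hP.inter hQ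

/-- The Riesz potential `∫ g(z) |z - y|^(a - n) dz` of a nonnegative function. -/
noncomputable def rieszPot (a : ℝ) (g : EuclideanSpace ℝ (Fin n) → ℝ≥0∞)
    (y : EuclideanSpace ℝ (Fin n)) : ℝ≥0∞ :=
  ∫⁻ z, g z * ‖z - y‖ₑ ^ (-((n : ℝ) - a))

/-- The part of the integrand of the Riesz potential that is local (`|z - y| < l^(-q/n)`) and high
(`g z > l^(q/p)`). -/
noncomputable def rieszLocal (a p q : ℝ) (g : EuclideanSpace ℝ (Fin n) → ℝ≥0∞) (l : ℝ)
    (y z : EuclideanSpace ℝ (Fin n)) : ℝ≥0∞ :=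
  {z | dist z y < l ^ (-(q / n)) ∧ ENNReal.ofReal l < g z ^ (p / q)}.indicator
    (fun z => g z * ‖z - y‖ₑ ^ (-((n : ℝ) - a))) z

lemma measurable_rieszPot (a : ℝ) {g : EuclideanSpace ℝ (Fin n) → ℝ≥0∞} (hg : Measurable g) :
    Measurable (rieszPot a g) := by
  unfold rieszPot
  refine Measurable.lintegral_prod_right' (f := fun w : EuclideanSpace ℝ (Fin n) ×
    EuclideanSpace ℝ (Fin n) => g w.2 * ‖w.2 - w.1‖ₑ ^ (-((n : ℝ) - a))) ?_
  fun_prop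

lemma measurable_rieszLocal (a p q : ℝ) {g : EuclideanSpace ℝ (Fin n) → ℝ≥0∞}
    (hg : Measurable g) {W : Type*} [MeasurableSpace W] {l : W → ℝ}
    {y z : W → EuclideanSpace ℝ (Fin n)} (hl : Measurable l) (hy : Measurable y)
    (hz : Measurable z) :
    Measurable fun w => rieszLocal a p q g (l w) (y w) (z w) := by
  have : (fun w => rieszLocal a p q g (l w) (y w) (z w)) =
      {w | dist (z w) (y w) < l w ^ (-(q / n)) ∧
        ENNReal.ofReal (l w) < g (z w) ^ (p / q)}.indicator
      (fun w => g (z w) * ‖z w - y w‖ₑ ^ (-((n : ℝ) - a))) := by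
    ext w
    simp [rieszLocal, Set.indicator]
  rw [this]
  refine Measurable.indicator (by fun_prop) (measurableSet_and
    (measurableSet_lt (by fun_prop) (by fun_prop)) (measurableSet_lt (by fun_prop) (by fun_prop)))

/-- For `‖g‖_p ≤ 1`, everything discarded in `rieszLocal` contributes at most `M l` to the
potential: outside `B(y, l^(-q/n))` by Hölder's inequality, inside it because there `g ≤ l^(q/p)`.
The radius and the height are chosen so that both contributions are exactly linear in `l`. -/
lemma rieszPot_le_local (hn : 1 ≤ n) {a p q : ℝ} (ha : 0 < a) (han : a < n) (hp : 1 < p)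
    (hq : 0 < q) (hpq : 1 / q = 1 / p - a / n) :
    ∃ M > (0 : ℝ), ∀ g : EuclideanSpace ℝ (Fin n) → ℝ≥0∞, Measurable g → ∫⁻ z, g z ^ p ≤ 1 →
      ∀ y, ∀ l > (0 : ℝ),
        rieszPot a g y ≤ ENNReal.ofReal (M * l) + ∫⁻ z, rieszLocal a p q g l y z := by
  have hn0 : (0 : ℝ) < n := by exact_mod_cast hn
  have hp0 : 0 < p := by linarith
  set p' := p.conjExponent with hp'
  have hconj : p.HolderConjugate p' := Real.HolderConjugate.conjExponent hp
  have hp'0 : 0 < p' := hconj.symm.pos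
  have hinv : 1 / p' = 1 - 1 / p := by
    have := hconj.inv_add_inv_eq_one
    simp only [one_div]; linarith
  have hs : 0 < (n : ℝ) - a := by linarith
  have hfar : (n : ℝ) < ((n : ℝ) - a) * p' := by
    have h1 : 0 < 1 / q := by positivity
    have h2 : a / n < 1 - 1 / p' := by linarith
    rw [div_lt_iff₀ hn0] at h2
    have h3 : (n : ℝ) / p' < n - a := by
      have : (n : ℝ) / p' = 1 / p' * n := by ring
      rw [this]; linarith
    rwa [div_lt_iff₀ hp'0] at h3
  obtain ⟨A, hA, hAb⟩ := exists_far_bound hn hfar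
  obtain ⟨B, hB, hBb⟩ := exists_near_bound hn hs (by linarith : (n : ℝ) - a < n)
  refine ⟨B + A ^ (1 / p'), by positivity, fun g hg hg1 y l hl => ?_⟩
  set δ := l ^ (-(q / n)) with hδ
  have hδ0 : 0 < δ := by positivity
  have hK : Measurable fun z : EuclideanSpace ℝ (Fin n) => ‖z - y‖ₑ ^ (-((n : ℝ) - a)) := by
    fun_prop
  have hfarle : ∫⁻ z in (ball y δ)ᶜ, g z * ‖z - y‖ₑ ^ (-((n : ℝ) - a)) ≤
      ENNReal.ofReal (A ^ (1 / p') * l) := by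
    calc _ ≤ (∫⁻ z in (ball y δ)ᶜ, g z ^ p) ^ (1 / p) *
          (∫⁻ z in (ball y δ)ᶜ, (‖z - y‖ₑ ^ (-((n : ℝ) - a))) ^ p') ^ (1 / p') :=
          ENNReal.lintegral_mul_le_Lp_mul_Lq _ hconj hg.aemeasurable hK.aemeasurable
      _ ≤ 1 ^ (1 / p) * (ENNReal.ofReal (A * δ ^ ((n : ℝ) - ((n : ℝ) - a) * p'))) ^ (1 / p') := by
          gcongr
          · exact (setLIntegral_le_lintegral _ _).trans hg1
          · simp only [← ENNReal.rpow_mul, neg_mul]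
            exact hAb δ hδ0 y
      _ = _ := by
          rw [ENNReal.one_rpow, one_mul, ofReal_rpow_of_pos (by positivity)]
          congr 1
          rw [Real.mul_rpow hA.le (by positivity), hδ, ← Real.rpow_mul hl.le, ← Real.rpow_mul hl.le]
          congr 1
          conv_rhs => rw [← Real.rpow_one l]
          congr 1
          have e1 : ((n : ℝ) - ((n : ℝ) - a) * p') * (1 / p') = n * (1 / p') - (n - a) := by
            field_simp
          have e2 : a - n * (1 / p) = - n * (1 / q) := by
            rw [hpq]; field_simp; ring
          rw [mul_assoc, e1, hinv, show (n : ℝ) * (1 - 1 / p) - (n - a) = a - n * (1 / p) by ring, e2]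
          field_simp
  have hnear : ∫⁻ z in ball y δ, g z * ‖z - y‖ₑ ^ (-((n : ℝ) - a)) ≤
      ENNReal.ofReal (B * l) + ∫⁻ z, rieszLocal a p q g l y z := by
    calc _ ≤ ∫⁻ z in ball y δ, (ENNReal.ofReal (l ^ (q / p)) * ‖z - y‖ₑ ^ (-((n : ℝ) - a)) +
            rieszLocal a p q g l y z) := by
          refine setLIntegral_mono' measurableSet_ball fun z hz => ?_
          by_cases h : ENNReal.ofReal l < g z ^ (p / q)
          · have : rieszLocal a p q g l y z = g z * ‖z - y‖ₑ ^ (-((n : ℝ) - a)) :=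
              Set.indicator_of_mem (s := {z | dist z y < l ^ (-(q / n)) ∧
                ENNReal.ofReal l < g z ^ (p / q)}) ⟨hz, h⟩ _
            rw [this]; exact le_add_self
          · refine le_add_right (mul_le_mul_left ?_ _)
            rw [← ofReal_rpow_of_pos hl]
            calc g z = (g z ^ (p / q)) ^ (q / p) := by
                  rw [← ENNReal.rpow_mul, div_mul_div_cancel₀ hq.ne', div_self hp0.ne',
                    ENNReal.rpow_one]
              _ ≤ _ := ENNReal.rpow_le_rpow (not_lt.1 h) (by positivity)
      _ ≤ ENNReal.ofReal (l ^ (q / p)) * ENNReal.ofReal (B * δ ^ ((n : ℝ) - (n - a))) +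
            ∫⁻ z, rieszLocal a p q g l y z := by
          rw [lintegral_add_left (by fun_prop), lintegral_const_mul' _ _ ofReal_ne_top]
          exact add_le_add (mul_le_mul_right (hBb δ hδ0 y) _) (setLIntegral_le_lintegral _ _)
      _ = _ := by
          rw [← ofReal_mul (by positivity)]
          congr 2
          rw [hδ, ← Real.rpow_mul hl.le, mul_left_comm, ← Real.rpow_add hl]
          congr 1
          conv_rhs => rw [← Real.rpow_one l]
          congr 1
          have : q / p + -(q / n) * (n - (n - a)) = q * (1 / p - a / n) := by ring
          rw [this, ← hpq, mul_one_div_cancel hq.ne']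
  calc rieszPot a g y = (∫⁻ z in ball y δ, g z * ‖z - y‖ₑ ^ (-((n : ℝ) - a))) +
        ∫⁻ z in (ball y δ)ᶜ, g z * ‖z - y‖ₑ ^ (-((n : ℝ) - a)) :=
        (lintegral_add_compl _ measurableSet_ball).symm
    _ ≤ (ENNReal.ofReal (B * l) + ∫⁻ z, rieszLocal a p q g l y z) +
        ENNReal.ofReal (A ^ (1 / p') * l) := add_le_add hnear hfarle
    _ = _ := by
        rw [add_mul, ofReal_add (by positivity) (by positivity)]
        ring

/-- Truncated layer-cake bound: if `X ≤ M l + G l` for all `l > 0`, then `G l ≥ M l` as soon as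
`X > 2 M l`, so `X ^ q` is controlled by `∫ l^(q-2) G l dl`. -/
lemma rpow_le_lintegral_of_le_add {M q : ℝ} (hM : 0 < M) (hq : 0 < q) {X : ℝ≥0∞} {G : ℝ → ℝ≥0∞}
    (hX : ∀ l > (0 : ℝ), X ≤ ENNReal.ofReal (M * l) + G l) :
    X ^ q ≤ ENNReal.ofReal ((2 * M) ^ q * q / M) *
      ∫⁻ l in Set.Ioi (0 : ℝ), ENNReal.ofReal (l ^ (q - 2)) * G l := by
  have h2M : ENNReal.ofReal (2 * M) ≠ 0 := by simpa using hM
  have key : (X / ENNReal.ofReal (2 * M)) ^ q / ENNReal.ofReal q ≤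
      ENNReal.ofReal M⁻¹ * ∫⁻ l in Set.Ioi (0 : ℝ), ENNReal.ofReal (l ^ (q - 2)) * G l := by
    rw [← lintegral_rpow_lt hq, ← lintegral_const_mul' _ _ ofReal_ne_top]
    have hms : MeasurableSet {t : ℝ | 0 < t ∧ ENNReal.ofReal t < X / ENNReal.ofReal (2 * M)} :=
      measurableSet_and measurableSet_Ioi (measurableSet_lt (by fun_prop) (by fun_prop))
    refine (setLIntegral_mono' hms fun l hl => ?_).trans
      (lintegral_mono_set (show _ ⊆ Set.Ioi (0 : ℝ) from fun l hl => hl.1))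
    obtain ⟨hl0, hl⟩ := hl
    have h1 : ENNReal.ofReal (M * l) ≤ G l := by
      rw [ENNReal.lt_div_iff_mul_lt (Or.inl h2M) (Or.inl ofReal_ne_top),
        ← ofReal_mul hl0.le, show l * (2 * M) = M * l + M * l by ring,
        ofReal_add (by positivity) (by positivity)] at hl
      exact ((ENNReal.add_lt_add_iff_left ofReal_ne_top).1 (hl.trans_le (hX l hl0))).le
    calc ENNReal.ofReal (l ^ (q - 1))
        = ENNReal.ofReal M⁻¹ * (ENNReal.ofReal (l ^ (q - 2)) * ENNReal.ofReal (M * l)) := by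
          rw [← ofReal_mul (by positivity), ← ofReal_mul (by positivity)]
          congr 1
          rw [show q - 1 = q - 2 + 1 by ring, Real.rpow_add hl0, Real.rpow_one]
          field_simp
      _ ≤ _ := by gcongr
  calc X ^ q = ENNReal.ofReal ((2 * M) ^ q * q) *
        ((X / ENNReal.ofReal (2 * M)) ^ q / ENNReal.ofReal q) := by
        rw [ENNReal.div_rpow_of_nonneg _ _ hq.le, ofReal_mul (by positivity),
          ofReal_rpow_of_pos (by positivity), mul_assoc,
          ENNReal.mul_div_cancel (by simpa using hq) ofReal_ne_top,
          ENNReal.mul_div_cancel (by simp; positivity) ofReal_ne_top]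
    _ ≤ _ := by
        rw [div_eq_mul_inv _ M, ofReal_mul (p := (2 * M) ^ q * q) (by positivity), mul_assoc]
        exact mul_le_mul_right key _

/-- Integrating the local high part in `y` first leaves an explicit power of `l` on the set of
levels `l < (g z)^(p/q)`. -/
lemma lintegral_rieszLocal_le (hn : 1 ≤ n) {a p q : ℝ} (ha : 0 < a) (han : a < n) :
    ∃ B > (0 : ℝ), ∀ (g : EuclideanSpace ℝ (Fin n) → ℝ≥0∞), ∀ l > (0 : ℝ), ∀ z,
      ∫⁻ y, rieszLocal a p q g l y z ≤
      {l : ℝ | 0 < l ∧ ENNReal.ofReal l < g z ^ (p / q)}.indicator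
        (fun l => g z * ENNReal.ofReal (B * l ^ (-(q / n * a)))) l := by
  have hs : 0 < (n : ℝ) - a := by linarith
  obtain ⟨B, hB, hBb⟩ := exists_near_bound hn hs (by linarith : (n : ℝ) - a < n)
  refine ⟨B, hB, fun g l hl z => ?_⟩
  by_cases h : ENNReal.ofReal l < g z ^ (p / q)
  · rw [Set.indicator_of_mem (s := {l : ℝ | 0 < l ∧ ENNReal.ofReal l < g z ^ (p / q)}) ⟨hl, h⟩]
    calc ∫⁻ y, rieszLocal a p q g l y z
        = ∫⁻ y in ball z (l ^ (-(q / n))), g z * ‖y - z‖ₑ ^ (-((n : ℝ) - a)) := by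
          rw [← lintegral_indicator measurableSet_ball]
          refine lintegral_congr fun y => ?_
          simp only [rieszLocal, Set.indicator, Set.mem_ofPred_eq, h, and_true, mem_ball,
            dist_comm z y, ← edist_eq_enorm_sub, edist_comm z y]
      _ = g z * ∫⁻ y in ball z (l ^ (-(q / n))), ‖y - z‖ₑ ^ (-((n : ℝ) - a)) :=
          lintegral_const_mul _ (by fun_prop)
      _ ≤ g z * ENNReal.ofReal (B * (l ^ (-(q / n))) ^ ((n : ℝ) - (n - a))) :=
          mul_le_mul_right (hBb _ (by positivity) z) _
      _ = _ := by
          rw [← Real.rpow_mul hl.le]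
          congr 4; ring
  · have : ∀ y, rieszLocal a p q g l y z = 0 := fun y =>
      Set.indicator_of_notMem (fun hz => h hz.2) _
    simp [this]

lemma lintegral_rieszLocal_swap (a p q b : ℝ) {g : EuclideanSpace ℝ (Fin n) → ℝ≥0∞}
    (hg : Measurable g) :
    ∫⁻ y, ∫⁻ l in Set.Ioi (0 : ℝ), ENNReal.ofReal (l ^ b) * ∫⁻ z, rieszLocal a p q g l y z =
      ∫⁻ l in Set.Ioi (0 : ℝ), ENNReal.ofReal (l ^ b) *
        ∫⁻ z, ∫⁻ y, rieszLocal a p q g l y z := by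
  have hmeas : Measurable fun w : EuclideanSpace ℝ (Fin n) × ℝ =>
      ∫⁻ z, rieszLocal a p q g w.2 w.1 z :=
    Measurable.lintegral_prod_right'
      (f := fun v : (EuclideanSpace ℝ (Fin n) × ℝ) × EuclideanSpace ℝ (Fin n) =>
        rieszLocal a p q g v.1.2 v.1.1 v.2)
      (measurable_rieszLocal a p q hg (by fun_prop) (by fun_prop) (by fun_prop))
  have hmeas1 : Measurable (Function.uncurry fun (y : EuclideanSpace ℝ (Fin n)) (l : ℝ) =>
      ENNReal.ofReal (l ^ b) * ∫⁻ z, rieszLocal a p q g l y z) := by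
    simp only [Function.uncurry_def]
    exact Measurable.mul (by fun_prop) hmeas
  have hmeas2 : ∀ l, Measurable (Function.uncurry fun (y z : EuclideanSpace ℝ (Fin n)) =>
      rieszLocal a p q g l y z) := by
    intro l
    simp only [Function.uncurry_def]
    exact measurable_rieszLocal a p q hg (by fun_prop) (by fun_prop) (by fun_prop)
  rw [lintegral_lintegral_swap hmeas1.aemeasurable]
  refine lintegral_congr fun l => ?_
  rw [lintegral_const_mul' _ _ ofReal_ne_top, lintegral_lintegral_swap (hmeas2 l).aemeasurable]

/-- Integrating over the levels first turns the level set condition into a power of `g z`. -/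
lemma lintegral_level_swap (p q σ B : ℝ) (hσ0 : 0 < σ) {g : EuclideanSpace ℝ (Fin n) → ℝ≥0∞}
    (hg : Measurable g) :
    ∫⁻ l in Set.Ioi (0 : ℝ), ∫⁻ z,
        {l : ℝ | 0 < l ∧ ENNReal.ofReal l < g z ^ (p / q)}.indicator
          (fun l => g z * ENNReal.ofReal B * ENNReal.ofReal (l ^ (σ - 1))) l =
      ∫⁻ z, g z * ENNReal.ofReal B * (g z ^ (p / q * σ) / ENNReal.ofReal σ) := by
  rw [lintegral_lintegral_swap]
  · refine lintegral_congr fun z => ?_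
    have hms : MeasurableSet {l : ℝ | 0 < l ∧ ENNReal.ofReal l < g z ^ (p / q)} :=
      measurableSet_and measurableSet_Ioi (measurableSet_lt (by fun_prop) (by fun_prop))
    have hsub : {l : ℝ | 0 < l ∧ ENNReal.ofReal l < g z ^ (p / q)} ⊆ Set.Ioi 0 :=
      fun l hl => hl.1
    rw [setLIntegral_indicator hms, Set.inter_eq_left.2 hsub,
      lintegral_const_mul _ (by fun_prop), lintegral_rpow_lt hσ0, ← ENNReal.rpow_mul]
  · refine Measurable.aemeasurable ?_
    have : (Function.uncurry fun (l : ℝ) (z : EuclideanSpace ℝ (Fin n)) =>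
        {l : ℝ | 0 < l ∧ ENNReal.ofReal l < g z ^ (p / q)}.indicator
        (fun l => g z * ENNReal.ofReal B * ENNReal.ofReal (l ^ (σ - 1))) l) =
        {w : ℝ × EuclideanSpace ℝ (Fin n) | 0 < w.1 ∧
          ENNReal.ofReal w.1 < g w.2 ^ (p / q)}.indicator
        (fun w => g w.2 * ENNReal.ofReal B * ENNReal.ofReal (w.1 ^ (σ - 1))) := by
      ext ⟨l, z⟩
      simp [Set.indicator]
    rw [this]
    exact Measurable.indicator (by fun_prop) (measurableSet_and
      (measurableSet_lt (by fun_prop) (by fun_prop))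
      (measurableSet_lt (by fun_prop) (by fun_prop)))

/-- The Hardy–Littlewood–Sobolev inequality for `‖g‖_p ≤ 1`: the layer-cake bound
`rpow_le_lintegral_of_le_add` reduces it to a triple integral of `rieszLocal`, and by Tonelli's
theorem the integrals in `y`, then `l`, then `z` give a constant times `∫ g^p`. -/
lemma hls_normalized (hn : 1 ≤ n) {a p q : ℝ} (ha : 0 < a) (han : a < n) (hp : 1 < p)
    (hq : 0 < q) (hpq : 1 / q = 1 / p - a / n) :
    ∃ C > (0 : ℝ), ∀ g : EuclideanSpace ℝ (Fin n) → ℝ≥0∞, Measurable g → ∫⁻ z, g z ^ p ≤ 1 →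
      ∫⁻ y, rieszPot a g y ^ q ≤ ENNReal.ofReal C := by
  have hn0 : (0 : ℝ) < n := by exact_mod_cast hn
  have hp0 : 0 < p := by linarith
  obtain ⟨M, hM, hMb⟩ := rieszPot_le_local hn ha han hp hq hpq
  obtain ⟨B, hB, hBb⟩ := lintegral_rieszLocal_le hn (p := p) (q := q) ha han
  -- The exponent of the `l`-integral once the integration in `y` has been carried out.
  obtain ⟨σ, hσ⟩ : ∃ σ, σ = q * (1 - 1 / p) := ⟨_, rfl⟩
  have hσ0 : 0 < σ := by
    have : 1 / p < 1 := by rw [div_lt_one hp0]; exact hp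
    rw [hσ]
    exact mul_pos hq (by linarith)
  have hσ1 : q - 2 + -(q / n * a) = σ - 1 := by
    have : q * (1 / p - a / n) = 1 := by rw [← hpq, mul_one_div_cancel hq.ne']
    have e : q / n * a = q * (a / n) := by ring
    rw [hσ, e]; linarith
  have hσ2 : p / q * σ = p - 1 := by rw [hσ]; field_simp
  obtain ⟨K, hK⟩ : ∃ K, K = (2 * M) ^ q * q / M := ⟨_, rfl⟩
  have hK0 : 0 < K := by rw [hK]; positivity
  refine ⟨K * (B / σ), by positivity, fun g hg hg1 => ?_⟩
  have step1 : ∫⁻ y, rieszPot a g y ^ q ≤ ENNReal.ofReal K * ∫⁻ l in Set.Ioi (0 : ℝ),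
          ENNReal.ofReal (l ^ (q - 2)) * ∫⁻ z, ∫⁻ y, rieszLocal a p q g l y z := by
    rw [← lintegral_rieszLocal_swap _ _ _ _ hg, ← lintegral_const_mul' _ _ ofReal_ne_top, hK]
    exact lintegral_mono fun y => rpow_le_lintegral_of_le_add hM hq (hMb g hg hg1 y)
  have step2 : ∫⁻ l in Set.Ioi (0 : ℝ),
      ENNReal.ofReal (l ^ (q - 2)) * ∫⁻ z, ∫⁻ y, rieszLocal a p q g l y z ≤
      ∫⁻ l in Set.Ioi (0 : ℝ), ∫⁻ z,
          {l : ℝ | 0 < l ∧ ENNReal.ofReal l < g z ^ (p / q)}.indicator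
            (fun l => g z * ENNReal.ofReal B * ENNReal.ofReal (l ^ (σ - 1))) l := by
    refine setLIntegral_mono' measurableSet_Ioi fun l hl => ?_
    rw [← lintegral_const_mul' _ _ ofReal_ne_top]
    refine lintegral_mono fun z => (mul_le_mul_right (hBb g l hl z) _).trans_eq ?_
    have hl0 : 0 < l := hl
    simp only [Set.indicator]
    split_ifs
    · rw [mul_left_comm, mul_assoc, ← ofReal_mul (by positivity), ← ofReal_mul hB.le,
        mul_left_comm (l ^ (q - 2)), ← Real.rpow_add hl0, hσ1]
    · simp
  have step3 : ∫⁻ z, g z * ENNReal.ofReal B * (g z ^ (p / q * σ) / ENNReal.ofReal σ) =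
      ENNReal.ofReal (B / σ) * ∫⁻ z, g z ^ p := by
    rw [← lintegral_const_mul' _ _ ofReal_ne_top]
    refine lintegral_congr fun z => ?_
    have : g z ^ p = g z * g z ^ (p - 1) := by
      conv_lhs => rw [show p = 1 + (p - 1) by ring,
          ENNReal.rpow_add_of_nonneg _ _ zero_le_one (by linarith), ENNReal.rpow_one]
    rw [hσ2, ofReal_div_of_pos hσ0, this]
    simp only [div_eq_mul_inv]
    ring
  rw [lintegral_level_swap p q σ B hσ0 hg, step3] at step2
  refine step1.trans ?_
  rw [ofReal_mul hK0.le]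
  exact mul_le_mul_right (step2.trans ((mul_le_mul_right hg1 _).trans_eq (mul_one _))) _

/-- The Hardy–Littlewood–Sobolev inequality for nonnegative functions, by scaling from
`hls_normalized`. -/
lemma hls (hn : 1 ≤ n) {a p q : ℝ} (ha : 0 < a) (han : a < n) (hp : 1 < p)
    (hq : 0 < q) (hpq : 1 / q = 1 / p - a / n) :
    ∃ C > (0 : ℝ), ∀ g : EuclideanSpace ℝ (Fin n) → ℝ≥0∞, Measurable g →
      (∫⁻ y, rieszPot a g y ^ q) ^ (1 / q) ≤ ENNReal.ofReal C * (∫⁻ z, g z ^ p) ^ (1 / p) := by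
  have hp0 : 0 < p := by linarith
  obtain ⟨C, hC, hCb⟩ := hls_normalized hn ha han hp hq hpq
  refine ⟨C ^ (1 / q), by positivity, fun g hg => ?_⟩
  set N := (∫⁻ z, g z ^ p) ^ (1 / p) with hN
  have hNp : N ^ p = ∫⁻ z, g z ^ p := by
    rw [hN, ← ENNReal.rpow_mul, one_div_mul_cancel hp0.ne', ENNReal.rpow_one]
  by_cases h0 : N = 0
  · have hg0 : ∀ᵐ z, g z = 0 := by
      have : ∫⁻ z, g z ^ p = 0 := by rw [← hNp, h0, ENNReal.zero_rpow_of_pos hp0]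
      rw [lintegral_eq_zero_iff (by fun_prop)] at this
      filter_upwards [this] with z hz
      exact (ENNReal.rpow_eq_zero_iff_of_pos hp0).1 hz
    have : ∀ y, rieszPot a g y = 0 := fun y => by
      unfold rieszPot
      rw [lintegral_eq_zero_iff (by fun_prop)]
      filter_upwards [hg0] with z hz
      simp [hz]
    simp [this, ENNReal.zero_rpow_of_pos hq, ENNReal.zero_rpow_of_pos (inv_pos.2 hq)]
  by_cases htop : N = ⊤
  · rw [htop, mul_top (by simp; positivity)]
    exact le_top
  have hNi : N⁻¹ ≠ ⊤ := ENNReal.inv_ne_top.2 h0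
  have hscale : ∀ y, rieszPot a (fun z => N⁻¹ * g z) y = N⁻¹ * rieszPot a g y := fun y => by
    unfold rieszPot
    rw [← lintegral_const_mul' _ _ hNi]
    simp only [mul_assoc]
  have h1 := hCb (fun z => N⁻¹ * g z) (by fun_prop) (by
    simp only [ENNReal.mul_rpow_of_nonneg _ _ hp0.le]
    rw [lintegral_const_mul _ (by fun_prop), ← hNp, ← ENNReal.mul_rpow_of_nonneg _ _ hp0.le,
      ENNReal.inv_mul_cancel h0 htop, ENNReal.one_rpow])
  simp only [hscale, ENNReal.mul_rpow_of_nonneg _ _ hq.le] at h1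
  rw [lintegral_const_mul _ ((measurable_rieszPot a hg).pow_const q)] at h1
  have h2 := ENNReal.rpow_le_rpow h1 (show 0 ≤ 1 / q by positivity)
  rw [ENNReal.mul_rpow_of_nonneg _ _ (by positivity), ← ENNReal.rpow_mul,
    mul_one_div_cancel hq.ne', ENNReal.rpow_one, ofReal_rpow_of_pos hC] at h2
  rw [mul_comm]
  rwa [mul_comm, ← div_eq_mul_inv, ENNReal.div_le_iff h0 htop, mul_comm] at h2

/-! ### The local estimate for one potential -/

/-- Hölder's inequality on a ball, with the volume of the ball made explicit. -/
lemma lintegral_ball_le (hn : 1 ≤ n) {p : ℝ} (hp : 1 < p)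
    {g : EuclideanSpace ℝ (Fin n) → ℝ≥0∞} (hg : Measurable g) (x : EuclideanSpace ℝ (Fin n))
    {t : ℝ} (ht : 0 < t) :
    ∫⁻ z in ball x t, g z ≤
      ENNReal.ofReal ((volume (ball (0 : EuclideanSpace ℝ (Fin n)) 1)).toReal ^ (1 - 1 / p) *
        t ^ ((n : ℝ) - n / p)) * (∫⁻ z in ball x t, g z ^ p) ^ (1 / p) := by
  have hconj : p.HolderConjugate p.conjExponent := Real.HolderConjugate.conjExponent hp
  have hinv : 1 / p.conjExponent = 1 - 1 / p := by
    have := hconj.inv_add_inv_eq_one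
    simp only [one_div]; linarith
  have h := ENNReal.lintegral_mul_le_Lp_mul_Lq (volume.restrict (ball x t)) hconj
    hg.aemeasurable (aemeasurable_const (b := (1 : ℝ≥0∞)))
  have hc := ball_volume_pos (n := n)
  simp only [Pi.mul_apply, mul_one, ENNReal.one_rpow, lintegral_one, Measure.restrict_apply_univ]
    at h
  rw [hinv, volume_ball_eq hn x ht, ofReal_rpow_of_pos (by positivity),
    Real.mul_rpow hc.le (by positivity), ← Real.rpow_mul ht.le, mul_comm] at h
  refine h.trans_eq ?_
  congr 4; ring

/-- The far part: the potential of a function vanishing on `B(x,2r)` is bounded on `B(x,r)` by the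
tail integral. -/
lemma rieszPot_far_le (hn : 1 ≤ n) {a p : ℝ} (han : a < n) (hp : 1 < p) :
    ∃ D > (0 : ℝ), ∀ (x : EuclideanSpace ℝ (Fin n)) (r : ℝ), 0 < r →
      ∀ g : EuclideanSpace ℝ (Fin n) → ℝ≥0∞, Measurable g → ∀ y ∈ ball x r,
      rieszPot a ((ball x (2 * r))ᶜ.indicator g) y ≤
        ENNReal.ofReal D * ∫⁻ t in Set.Ioi (2 * r), ENNReal.ofReal (t ^ (a - n / p - 1)) *
          (∫⁻ z in ball x t, g z ^ p) ^ (1 / p) := by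
  obtain ⟨c, hc⟩ : ∃ c, c = (volume (ball (0 : EuclideanSpace ℝ (Fin n)) 1)).toReal := ⟨_, rfl⟩
  have hc0 : 0 < c := hc ▸ ball_volume_pos
  obtain ⟨s, hsdef⟩ : ∃ s : ℝ, s = n - a := ⟨_, rfl⟩
  have hs : 0 < s := by rw [hsdef]; linarith
  refine ⟨2 ^ s * (s * c ^ (1 - 1 / p)), by positivity, fun x r hr g hg y hy => ?_⟩
  have hms : MeasurableSet (ball x (2 * r))ᶜ := measurableSet_ball.compl
  have hker : ∀ z ∈ (ball x (2 * r))ᶜ, ‖z - y‖ₑ ^ (-s) ≤ ENNReal.ofReal (2 ^ s) * ‖z - x‖ₑ ^ (-s) := by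
    intro z hz
    have hz' : 2 * r ≤ dist z x := by simpa using hz
    have hy' : dist y x < r := hy
    have htri : dist z x ≤ dist z y + dist y x := dist_triangle _ _ _
    have h1 : 0 < dist z x := by linarith
    have h2 : dist z x / 2 ≤ dist z y := by linarith
    rw [← ofReal_norm, ← ofReal_norm, ← dist_eq_norm, ← dist_eq_norm,
      ofReal_rpow_of_pos (by linarith), ofReal_rpow_of_pos h1, ← ofReal_mul (by positivity)]
    refine ofReal_le_ofReal ((Real.rpow_le_rpow_of_nonpos (by positivity) h2 (by linarith)).trans_eq ?_)
    rw [Real.div_rpow h1.le zero_le_two, Real.rpow_neg zero_le_two, div_inv_eq_mul, mul_comm]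
  calc rieszPot a ((ball x (2 * r))ᶜ.indicator g) y
      = ∫⁻ z in (ball x (2 * r))ᶜ, g z * ‖z - y‖ₑ ^ (-s) := by
        rw [← lintegral_indicator hms, hsdef]
        refine lintegral_congr fun z => ?_
        simp only [Set.indicator]
        split_ifs <;> simp
    _ ≤ ∫⁻ z in (ball x (2 * r))ᶜ, ENNReal.ofReal (2 ^ s) * (g z * ‖z - x‖ₑ ^ (-s)) := by
        refine setLIntegral_mono' hms fun z hz => ?_
        rw [mul_left_comm]
        exact mul_le_mul_right (hker z hz) _
    _ = ENNReal.ofReal (2 ^ s) *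
          ∫⁻ z, ‖z - x‖ₑ ^ (-s) ∂(volume.restrict (ball x (2 * r))ᶜ).withDensity g := by
        rw [lintegral_const_mul' _ _ ofReal_ne_top,
          lintegral_withDensity_eq_lintegral_mul _ hg (by fun_prop)]
        rfl
    _ = ENNReal.ofReal (2 ^ s) * (ENNReal.ofReal s * ∫⁻ t in Set.Ioi (0 : ℝ),
          ENNReal.ofReal (t ^ (-s - 1)) *
            (volume.restrict (ball x (2 * r))ᶜ).withDensity g (ball x t)) := by
        rw [lintegral_rpow_neg_eq_ball _ hs]
    _ ≤ ENNReal.ofReal (2 ^ s) * (ENNReal.ofReal s * ∫⁻ t in Set.Ioi (2 * r),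
          ENNReal.ofReal (c ^ (1 - 1 / p)) * (ENNReal.ofReal (t ^ (a - n / p - 1)) *
          (∫⁻ z in ball x t, g z ^ p) ^ (1 / p))) := by
        refine mul_le_mul_right (mul_le_mul_right ?_ _) _
        rw [← lintegral_indicator measurableSet_Ioi, ← lintegral_indicator measurableSet_Ioi]
        refine lintegral_mono fun t => ?_
        by_cases htr : 2 * r < t
        · have ht : 0 < t := by linarith
          simp only [Set.indicator, Set.mem_Ioi, htr, ht, if_true]
          have h1 : (volume.restrict (ball x (2 * r))ᶜ).withDensity g (ball x t) ≤
              ∫⁻ z in ball x t, g z := by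
            rw [withDensity_apply _ measurableSet_ball]
            exact lintegral_mono' (Measure.restrict_mono subset_rfl Measure.restrict_le_self) le_rfl
          refine (mul_le_mul_right (h1.trans (lintegral_ball_le hn hp hg x ht)) _).trans_eq ?_
          rw [← hc, ← mul_assoc, ← mul_assoc, ← ofReal_mul (by positivity),
            ← ofReal_mul (by positivity), mul_left_comm, ← Real.rpow_add ht]
          congr 4
          rw [hsdef]; ring
        · have : (volume.restrict (ball x (2 * r))ᶜ).withDensity g (ball x t) = 0 := by
            rw [withDensity_apply _ measurableSet_ball, Measure.restrict_restrict measurableSet_ball,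
              ← Set.sdiff_eq, Set.sdiff_eq_empty.2 (ball_subset_ball (not_lt.1 htr))]
            simp
          simp [Set.indicator, this]
    _ = _ := by
        rw [lintegral_const_mul' _ _ ofReal_ne_top, ofReal_mul (by positivity), ofReal_mul hs.le]
        ring

/-- The local estimate for a single Riesz potential: the part of `g` inside `B(x,2r)` is handled by
`hls`, the part outside by `rieszPot_far_le`. -/
lemma rieszPot_local_le (hn : 1 ≤ n) {a p q : ℝ} (ha : 0 < a) (han : a < n) (hp : 1 < p)
    (hq : 0 < q) (hpq : 1 / q = 1 / p - a / n) :
    ∃ C > (0 : ℝ), ∀ (x : EuclideanSpace ℝ (Fin n)) (r : ℝ), 0 < r →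
      ∀ g : EuclideanSpace ℝ (Fin n) → ℝ≥0∞, Measurable g →
      (∫⁻ y in ball x r, rieszPot a g y ^ q) ^ (1 / q) ≤
        ENNReal.ofReal (C * r ^ ((n : ℝ) / q)) *
          ∫⁻ t in Set.Ioi (2 * r), ENNReal.ofReal (t ^ (a - n / p - 1)) *
            (∫⁻ z in ball x t, g z ^ p) ^ (1 / p) := by
  have hn0 : (0 : ℝ) < n := by exact_mod_cast hn
  have hp0 : 0 < p := by linarith
  have hq1 : 1 ≤ q := by
    have h1 : 1 / p < 1 := by rw [div_lt_one hp0]; exact hp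
    have h2 : 0 < a / n := by positivity
    have h3 : 1 / q < 1 := by linarith
    rw [div_lt_one hq] at h3
    exact h3.le
  have hexp : a - n / p = -(n / q) := by
    have : (n : ℝ) / q = n * (1 / q) := by ring
    rw [this, hpq]; field_simp; ring
  obtain ⟨c, hc⟩ : ∃ c, c = (volume (ball (0 : EuclideanSpace ℝ (Fin n)) 1)).toReal := ⟨_, rfl⟩
  have hc0 : 0 < c := hc ▸ ball_volume_pos
  obtain ⟨C, hC, hCb⟩ := hls hn ha han hp hq hpq
  obtain ⟨D, hD, hDb⟩ := rieszPot_far_le hn han hp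
  refine ⟨C * (n / q * 2 ^ ((n : ℝ) / q)) + D * c ^ (1 / q), by positivity, fun x r hr g hg => ?_⟩
  have hfar := hDb x r hr g hg
  obtain ⟨T, hT⟩ : ∃ T, T = ∫⁻ t in Set.Ioi (2 * r), ENNReal.ofReal (t ^ (a - n / p - 1)) *
            (∫⁻ z in ball x t, g z ^ p) ^ (1 / p) := ⟨_, rfl⟩
  rw [← hT] at hfar ⊢
  have hg1 : Measurable ((ball x (2 * r)).indicator g) := hg.indicator measurableSet_ball
  have hg2 : Measurable ((ball x (2 * r))ᶜ.indicator g) := hg.indicator measurableSet_ball.compl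
  have hsplit : ∀ y, rieszPot a g y = rieszPot a ((ball x (2 * r)).indicator g) y +
      rieszPot a ((ball x (2 * r))ᶜ.indicator g) y := by
    intro y
    unfold rieszPot
    rw [← lintegral_add_left (by fun_prop)]
    refine lintegral_congr fun z => ?_
    rw [← add_mul, ← Pi.add_apply, Set.indicator_self_add_compl]
  -- The `L^p` norm over `B(x,t)` increases with `t`, so the norm over `B(x,2r)` is absorbed by `T`.
  have hN : (∫⁻ z in ball x (2 * r), g z ^ p) ^ (1 / p) ≤
      ENNReal.ofReal (n / q * (2 * r) ^ ((n : ℝ) / q)) * T := by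
    have hlow : ENNReal.ofReal ((2 * r) ^ (-((n : ℝ) / q)) / (n / q)) *
        (∫⁻ z in ball x (2 * r), g z ^ p) ^ (1 / p) ≤ T := by
      rw [← lintegral_Ioi_rpow_neg (by positivity) (by positivity),
        ← lintegral_mul_const _ (by fun_prop), hT, hexp]
      refine setLIntegral_mono' measurableSet_Ioi fun t ht => ?_
      gcongr
      exact le_of_lt ht
    refine le_trans (le_of_eq ?_) (mul_le_mul_right hlow _)
    rw [← mul_assoc, ← ofReal_mul (by positivity), Real.rpow_neg (by positivity)]
    have : (n : ℝ) / q * (2 * r) ^ ((n : ℝ) / q) * (((2 * r) ^ ((n : ℝ) / q))⁻¹ / (n / q)) = 1 := by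
      have : (0 : ℝ) < (2 * r) ^ ((n : ℝ) / q) := by positivity
      field_simp
    rw [this, ofReal_one, one_mul]
  have h1 : (∫⁻ y in ball x r, rieszPot a ((ball x (2 * r)).indicator g) y ^ q) ^ (1 / q) ≤
      ENNReal.ofReal (C * (n / q * 2 ^ ((n : ℝ) / q)) * r ^ ((n : ℝ) / q)) * T := by
    calc _ ≤ (∫⁻ y, rieszPot a ((ball x (2 * r)).indicator g) y ^ q) ^ (1 / q) := by
          gcongr
          exact Measure.restrict_le_self
      _ ≤ ENNReal.ofReal C * (∫⁻ z, (ball x (2 * r)).indicator g z ^ p) ^ (1 / p) := hCb _ hg1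
      _ = ENNReal.ofReal C * (∫⁻ z in ball x (2 * r), g z ^ p) ^ (1 / p) := by
          rw [← lintegral_indicator measurableSet_ball]
          congr 2
          refine lintegral_congr fun z => ?_
          simp only [Set.indicator]
          split_ifs
          · rfl
          · rw [ENNReal.zero_rpow_of_pos hp0]
      _ ≤ ENNReal.ofReal C * (ENNReal.ofReal (n / q * (2 * r) ^ ((n : ℝ) / q)) * T) :=
          mul_le_mul_right hN _
      _ = _ := by
          rw [← mul_assoc, ← ofReal_mul hC.le, Real.mul_rpow zero_le_two hr.le]
          congr 2; ring
  have h2 : (∫⁻ y in ball x r, rieszPot a ((ball x (2 * r))ᶜ.indicator g) y ^ q) ^ (1 / q) ≤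
      ENNReal.ofReal (D * c ^ (1 / q) * r ^ ((n : ℝ) / q)) * T := by
    calc _ ≤ (∫⁻ y in ball x r, (ENNReal.ofReal D * T) ^ q) ^ (1 / q) := by
          refine ENNReal.rpow_le_rpow (setLIntegral_mono' measurableSet_ball fun y hy => ?_)
            (by positivity)
          exact ENNReal.rpow_le_rpow (hfar y hy) hq.le
      _ = _ := by
          rw [setLIntegral_const, ENNReal.mul_rpow_of_nonneg _ _ (by positivity),
            ← ENNReal.rpow_mul, mul_one_div_cancel hq.ne', ENNReal.rpow_one,
            volume_ball_eq hn x hr, ← hc, ofReal_rpow_of_pos (by positivity),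
            Real.mul_rpow hc0.le (by positivity), ← Real.rpow_mul hr.le, mul_right_comm,
            ← ofReal_mul hD.le]
          congr 2
          rw [mul_one_div]; ring
  simp only [hsplit]
  refine (ENNReal.lintegral_Lp_add_le (measurable_rieszPot a hg1).aemeasurable
    (measurable_rieszPot a hg2).aemeasurable hq1).trans ((add_le_add h1 h2).trans_eq ?_)
  rw [← add_mul, ← ofReal_add (by positivity) (by positivity), ← add_mul]

/-! ### The multilinear operator -/

lemma lintegral_fin_prod {m : ℕ} {E : Type*} [MeasureSpace E] [SigmaFinite (volume : Measure E)]
    (f : Fin m → E → ℝ≥0∞) (hf : ∀ i, Measurable (f i)) :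
    ∫⁻ y : Fin m → E, ∏ i, f i (y i) = ∏ i, ∫⁻ z, f i z := by
  induction m with
  | zero => simp [volume_pi]
  | succ k ih =>
    rw [Fin.prod_univ_succ, ← ih (fun i => f i.succ) (fun i => hf _),
      ← lintegral_prod_mul (g := fun y : Fin k → E => ∏ i, f i.succ (y i)) (hf 0).aemeasurable
        (Finset.measurable_prod _ fun i _ => (hf _).comp (measurable_pi_apply i)).aemeasurable,
      ← Measure.volume_eq_prod,
      ← ((volume_preserving_piFinSuccAbove (fun _ : Fin (k + 1) => E) 0)).lintegral_comp_emb
        (MeasurableEquiv.measurableEmbedding _)]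
    refine lintegral_congr fun y => ?_
    rw [Fin.prod_univ_succ]
    rfl

/-- Since each `|y - w_i|` is at most `∑ |y - w_j|` and all the exponents `α i - n` are negative, the
multilinear kernel is dominated by the product of the linear ones, and the integral of a product
of functions of separate variables factors. No integrability is needed: where the Bochner integral
defining `multIFrac` diverges it is `0`. -/
lemma enorm_multIFrac_le {m : ℕ} (hm : 1 ≤ m) (α : Fin m → ℝ) (hα : ∀ i, α i < n)
    (f : Fin m → EuclideanSpace ℝ (Fin n) → ℝ) (hf : ∀ i, Measurable (f i))
    (y : EuclideanSpace ℝ (Fin n)) :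
    ‖multIFrac n m (∑ i, α i) f y‖ₑ ≤ ∏ i, rieszPot (α i) (fun z => ‖f i z‖ₑ) y := by
  have : Nonempty (Fin m) := ⟨⟨0, hm⟩⟩
  have hexp : (∑ i, α i) - (m : ℝ) * n = ∑ i, -((n : ℝ) - α i) := by
    simp [Finset.sum_sub_distrib]
  have hneg : ∑ i, -((n : ℝ) - α i) < 0 :=
    Finset.sum_neg (fun i _ => by have := hα i; linarith) Finset.univ_nonempty
  unfold multIFrac rieszPot
  rw [← lintegral_fin_prod _ (fun i => by have := hf i; fun_prop)]
  refine (enorm_integral_le_lintegral_enorm _).trans (lintegral_mono fun w => ?_)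
  have henorm : ‖∏ i, f i (w i)‖ₑ = ∏ i, ‖f i (w i)‖ₑ := by
    simp only [enorm_eq_nnnorm, nnnorm_prod, ENNReal.ofNNReal_finsetProd]
  rw [enorm_mul, Finset.prod_mul_distrib, henorm, hexp]
  refine mul_le_mul_right ?_ _
  have hS : 0 ≤ ∑ i, dist y (w i) := Finset.sum_nonneg fun i _ => dist_nonneg
  rcases hS.eq_or_lt with h0 | hpos
  -- If all `w i` equal `y`, the real power of `0` takes the value `0`.
  · rw [← h0, Real.zero_rpow hneg.ne]
    simp
  · rw [Real.enorm_of_nonneg (by positivity), Real.rpow_sum_of_pos hpos,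
      ofReal_prod_of_nonneg (fun i _ => by positivity)]
    refine Finset.prod_le_prod' fun i _ => ?_
    rw [← ofReal_rpow_of_pos hpos, ENNReal.rpow_neg, ENNReal.rpow_neg, ENNReal.inv_le_inv]
    refine ENNReal.rpow_le_rpow ?_ (by have := hα i; linarith)
    rw [← edist_eq_enorm_sub, edist_comm, edist_dist]
    exact ofReal_le_ofReal
      (Finset.single_le_sum (f := fun i => dist y (w i)) (fun i _ => dist_nonneg)
        (Finset.mem_univ i))

theorem stmt4 (n m : ℕ) (hn : 1 ≤ n) (hm : 1 ≤ m)
    (α p : Fin m → ℝ) (hα : ∀ i, 0 < α i ∧ α i < (n : ℝ))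
    (hp : ∀ i, 1 < p i ∧ p i < (n : ℝ) / α i)
    (q : ℝ) (hq : 1 / q = (∑ i, 1 / p i) - (∑ i, α i) / (n : ℝ)) (hq1 : 1 / q < 1) :
    ∃ C > (0 : ℝ), ∀ (x : EuclideanSpace ℝ (Fin n)) (r : ℝ), 0 < r →
      ∀ f : Fin m → EuclideanSpace ℝ (Fin n) → ℝ,
      (∀ i, Measurable (f i)) →
      (∀ i (x' : EuclideanSpace ℝ (Fin n)) (t : ℝ), 0 < t →
        (∫⁻ y in ball x' t, ENNReal.ofReal (|f i y| ^ p i)) < ⊤) →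
      (∫⁻ y in ball x r, ENNReal.ofReal (|multIFrac n m (∑ i, α i) f y| ^ q)) ^ (1 / q) ≤
        ENNReal.ofReal (C * r ^ ((n : ℝ) / q)) *
          ∏ i, ∫⁻ t in Set.Ioi (2 * r),
            ENNReal.ofReal (t ^ (α i - (n : ℝ) / p i - 1)) * ballLpNorm (p i) (f i) x t := by
  have : Nonempty (Fin m) := ⟨⟨0, hm⟩⟩
  have hn0 : (0 : ℝ) < n := by exact_mod_cast hn
  have hp0 : ∀ i, 0 < p i := fun i => by linarith [(hp i).1]
  have hQ : ∀ i, 0 < 1 / p i - α i / n := fun i => by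
    have h := (hp i).2
    rw [lt_div_iff₀ (hα i).1] at h
    rw [sub_pos, div_lt_div_iff₀ hn0 (hp0 i)]
    linarith
  -- The exponents `1 / Q i = 1 / p i - α i / n` of the linear potentials add up to `1 / q`.
  obtain ⟨Q, hQdef⟩ : ∃ Q : Fin m → ℝ, ∀ i, 1 / Q i = 1 / p i - α i / n :=
    ⟨fun i => 1 / (1 / p i - α i / n), fun i => by rw [one_div_one_div]⟩
  have hQ0 : ∀ i, 0 < Q i := fun i => by
    have := hQ i
    rw [← hQdef] at this
    exact one_div_pos.1 this
  have hsum : ∑ i, 1 / Q i = 1 / q := by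
    simp only [hQdef]
    rw [Finset.sum_sub_distrib, ← Finset.sum_div, hq]
  have hq0 : 0 < q := by
    rw [← one_div_pos, ← hsum]
    exact Finset.sum_pos (fun i _ => one_div_pos.2 (hQ0 i)) Finset.univ_nonempty
  choose C hC hCb using fun i =>
    rieszPot_local_le hn (hα i).1 (hα i).2 (hp i).1 (hQ0 i) (hQdef i)
  refine ⟨∏ i, C i, Finset.prod_pos fun i _ => hC i, fun x r hr f hf _ => ?_⟩
  calc (∫⁻ y in ball x r, ENNReal.ofReal (|multIFrac n m (∑ i, α i) f y| ^ q)) ^ (1 / q)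
      ≤ (∫⁻ y in ball x r,
          ∏ i, (rieszPot (α i) (fun z => ‖f i z‖ₑ) y ^ Q i) ^ (q / Q i)) ^ (1 / q) := by
        refine ENNReal.rpow_le_rpow (lintegral_mono fun y => ?_) (by positivity)
        rw [← ofReal_rpow_of_nonneg (abs_nonneg _) hq0.le, ← Real.enorm_eq_ofReal_abs]
        refine (ENNReal.rpow_le_rpow
          (enorm_multIFrac_le hm α (fun i => (hα i).2) f hf y) hq0.le).trans_eq ?_
        rw [← ENNReal.prod_rpow_of_nonneg hq0.le]
        refine Finset.prod_congr rfl fun i _ => ?_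
        rw [← ENNReal.rpow_mul, mul_div_cancel₀ _ (hQ0 i).ne']
    _ ≤ (∏ i, (∫⁻ y in ball x r,
          rieszPot (α i) (fun z => ‖f i z‖ₑ) y ^ Q i) ^ (q / Q i)) ^ (1 / q) := by
        refine ENNReal.rpow_le_rpow (ENNReal.lintegral_prod_norm_pow_le _ (fun i _ => ?_) ?_
          (fun i _ => (div_pos hq0 (hQ0 i)).le)) (by positivity)
        · exact ((measurable_rieszPot _ (hf i).enorm).pow_const _).aemeasurable
        · simp only [div_eq_mul_one_div q]
          rw [← Finset.mul_sum, hsum, mul_one_div_cancel hq0.ne']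
    _ = ∏ i, (∫⁻ y in ball x r, rieszPot (α i) (fun z => ‖f i z‖ₑ) y ^ Q i) ^ (1 / Q i) := by
        rw [← ENNReal.prod_rpow_of_nonneg (by positivity)]
        refine Finset.prod_congr rfl fun i _ => ?_
        rw [← ENNReal.rpow_mul]
        congr 1
        field_simp
    _ ≤ ∏ i, (ENNReal.ofReal (C i * r ^ ((n : ℝ) / Q i)) * ∫⁻ t in Set.Ioi (2 * r),
            ENNReal.ofReal (t ^ (α i - (n : ℝ) / p i - 1)) * ballLpNorm (p i) (f i) x t) := by
        refine Finset.prod_le_prod' fun i _ => (hCb i x r hr _ (hf i).enorm).trans_eq ?_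
        simp only [ballLpNorm, Real.enorm_eq_ofReal_abs,
          ofReal_rpow_of_nonneg (abs_nonneg _) (hp0 i).le]
    _ = _ := by
        rw [Finset.prod_mul_distrib, ← ofReal_prod_of_nonneg
          (fun i _ => by have := hC i; positivity), Finset.prod_mul_distrib,
          ← Real.rpow_sum_of_pos hr]
        congr 4
        simp only [div_eq_mul_one_div (n : ℝ)]
        rw [← Finset.mul_sum, hsum]
end

section
/- Let n ≥ 1 and m ≥ 1 be integers and 0 ≤ α < mn. Then there exists a constant C > 0, depending only on n, m and α, such that for all locally integrable functions f_1,…,f_m on ℝ^n and every x ∈ ℝ^n, one has M_{α,m}(f_1,…,f_m)(x) ≤ C · I_{α,m}(|f_1|,…,|f_m|)(x). -/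
/-!
On a ball `B` of radius `t` containing `x`, every `y ∈ B^m` satisfies `∑ dist x (y i) ≤ 2mt`, so,
the exponent `α - mn` being negative, the kernel of `I_{α,m}` is at least `(2mt)^(α - mn)` on `B^m`.
Since `|B| = v tⁿ` with `v = |B(0,1)|`, the factor `|B|^(α/n) |B|^(-m)` in the maximal operator
equals `v^(α/n - m) t^(α - mn)`, so it is at most `C` times the kernel with
`C = v^(α/n - m) (2m)^(mn - α)` (`kernel_lower_bound`). By Tonelli (`lintegral_pi_prod`), the
product of the integrals of `|f i|` over `B` is the integral of `∏ |f i (y i)|` over `B^m`, and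
enlarging the domain of integration from `B^m` to all of `(ℝⁿ)^m` gives the claim.

With the convention `0 ^ r = 0` for `r ≠ 0` the kernel vanishes at `y = (x, …, x)`. The pointwise
bound fails there, but this single point is a null set because `m, n ≥ 1`.
-/

open MeasureTheory Metric ENNReal

/-- The multilinear fractional maximal operator `M_{α,m}` on `ℝⁿ`. -/
noncomputable def multMFrac (n m : ℕ) (α : ℝ)
    (f : Fin m → EuclideanSpace ℝ (Fin n) → ℝ) (x : EuclideanSpace ℝ (Fin n)) : ℝ≥0∞ :=
  ⨆ (c : EuclideanSpace ℝ (Fin n)) (t : ℝ) (_ : x ∈ ball c t),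
    volume (ball c t) ^ (α / (n : ℝ)) *
      ∏ i, (volume (ball c t))⁻¹ * ∫⁻ y in ball c t, ENNReal.ofReal |f i y|

/-- The multilinear fractional integral operator `I_{α,m}` on `ℝⁿ`, applied to
nonnegative data `(|f₁|, …, |f_m|)`, as an `ℝ≥0∞`-valued integral. -/
noncomputable def multIFracAbs (n m : ℕ) (α : ℝ)
    (f : Fin m → EuclideanSpace ℝ (Fin n) → ℝ) (x : EuclideanSpace ℝ (Fin n)) : ℝ≥0∞ :=
  ∫⁻ y : Fin m → EuclideanSpace ℝ (Fin n),
    (∏ i, ENNReal.ofReal |f i (y i)|) *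
      ENNReal.ofReal ((∑ i, dist x (y i)) ^ (α - (m : ℝ) * (n : ℝ)))

/-- Tonelli for a product of functions of separate variables, over a finite power of a measure. -/
lemma lintegral_pi_prod {E : Type*} [MeasurableSpace E] (μ : Measure E) [SigmaFinite μ] :
    ∀ (m : ℕ) (g : Fin m → E → ℝ≥0∞), (∀ i, AEMeasurable (g i) μ) →
      ∫⁻ y : Fin m → E, ∏ i, g i (y i) ∂(Measure.pi fun _ => μ) = ∏ i, ∫⁻ z, g i z ∂μ := by
  intro m
  induction m with
  | zero => intro g _; simp
  | succ k ih =>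
    intro g hg
    have hmp := measurePreserving_piFinSuccAbove (fun _ : Fin (k + 1) => μ) 0
    have hemb := (MeasurableEquiv.piFinSuccAbove (fun _ : Fin (k + 1) => E) 0).measurableEmbedding
    have hgs : AEMeasurable (fun y : Fin k → E => ∏ i, g i.succ (y i))
        (Measure.pi fun _ => μ) := by
      refine Finset.aemeasurable_fun_prod _ fun i _ => ?_
      exact (hg i.succ).comp_quasiMeasurePreserving
        (Measure.quasiMeasurePreserving_eval (μ := fun _ : Fin k => μ) i)
    have h := hmp.lintegral_comp_emb hemb
      (fun p : E × (Fin k → E) => g 0 p.1 * ∏ i, g i.succ (p.2 i))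
    rw [lintegral_prod_mul (hg 0) hgs, ih _ fun i => hg i.succ] at h
    rw [Fin.prod_univ_succ, ← h]
    refine lintegral_congr fun y => ?_
    rw [Fin.prod_univ_succ]
    rfl

/-- The scaling identity behind the constant: `(v tⁿ)^(α/n - m)` is a multiple of
`(2mt)^(α - mn)`, which is at most `s^(α - mn)` for `0 < s ≤ 2mt`. -/
lemma kernel_lower_bound (n m : ℕ) (hn : 1 ≤ n) (hm : 1 ≤ m) (α v t s : ℝ)
    (hα : α < (m : ℝ) * (n : ℝ)) (hv : 0 < v) (ht : 0 < t) (hs : 0 < s) (hst : s ≤ 2 * m * t) :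
    (t ^ n * v) ^ (α / n - m) ≤
      v ^ (α / n - m) * (2 * m : ℝ) ^ ((m : ℝ) * n - α) * s ^ (α - (m : ℝ) * n) := by
  have hn' : (0 : ℝ) < n := by exact_mod_cast hn
  have hm' : (0 : ℝ) < 2 * m := by
    have : (0 : ℝ) < m := by exact_mod_cast hm
    positivity
  have h1 : (2 * m * t) ^ (α - (m : ℝ) * n) ≤ s ^ (α - (m : ℝ) * n) :=
    Real.rpow_le_rpow_of_nonpos hs hst (by linarith)
  have h2 : (t ^ n) ^ (α / n - m) = t ^ (α - (m : ℝ) * n) := by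
    rw [← Real.rpow_natCast, ← Real.rpow_mul ht.le]
    congr 1
    field_simp
  have h3 : (2 * m : ℝ) ^ ((m : ℝ) * n - α) * (2 * m : ℝ) ^ (α - (m : ℝ) * n) = 1 := by
    rw [← Real.rpow_add hm']
    simp
  calc (t ^ n * v) ^ (α / n - m)
      = v ^ (α / n - m) * t ^ (α - (m : ℝ) * n) := by
        rw [Real.mul_rpow (by positivity) hv.le, h2, mul_comm]
    _ = v ^ (α / n - m) * (2 * m : ℝ) ^ ((m : ℝ) * n - α) * (2 * m * t) ^ (α - (m : ℝ) * n) := by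
        rw [Real.mul_rpow hm'.le ht.le]
        linear_combination (- v ^ (α / n - m) * t ^ (α - (m : ℝ) * n)) * h3
    _ ≤ _ := by gcongr

theorem stmt6 (n m : ℕ) (hn : 1 ≤ n) (hm : 1 ≤ m)
    (α : ℝ) (hα : 0 ≤ α ∧ α < (m : ℝ) * (n : ℝ)) :
    ∃ C > (0 : ℝ), ∀ f : Fin m → EuclideanSpace ℝ (Fin n) → ℝ,
      (∀ i, LocallyIntegrable (f i) volume) →
      ∀ x : EuclideanSpace ℝ (Fin n),
        multMFrac n m α f x ≤ ENNReal.ofReal C * multIFracAbs n m α f x := by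
  have : Nonempty (Fin m) := ⟨⟨0, hm⟩⟩
  have : Nonempty (Fin n) := ⟨⟨0, hn⟩⟩
  set v : ℝ := (volume (ball (0 : EuclideanSpace ℝ (Fin n)) 1)).toReal with hvdef
  have hv : 0 < v :=
    ENNReal.toReal_pos (measure_ball_pos _ _ one_pos).ne' measure_ball_lt_top.ne
  have hm' : (0 : ℝ) < m := by exact_mod_cast hm
  refine ⟨v ^ (α / n - m) * (2 * m : ℝ) ^ ((m : ℝ) * n - α), by positivity, fun f hf x => ?_⟩
  set C : ℝ := v ^ (α / n - m) * (2 * m : ℝ) ^ ((m : ℝ) * n - α) with hC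
  have hCpos : 0 ≤ C := by positivity
  refine iSup_le fun c => iSup_le fun t => iSup_le fun hx => ?_
  have ht : 0 < t := pos_of_mem_ball hx
  have hg : ∀ i, AEMeasurable (fun y => ENNReal.ofReal |f i y|) (volume.restrict (ball c t)) :=
    fun i => by
      have := (hf i).aestronglyMeasurable.aemeasurable.restrict (s := ball c t)
      exact (measurable_abs.comp_aemeasurable this).ennreal_ofReal
  have hw : 0 < t ^ n * v := by positivity
  have hvol : volume (ball c t) = ENNReal.ofReal (t ^ n * v) := by
    rw [Measure.addHaar_ball_of_pos _ _ ht, finrank_euclideanSpace, Fintype.card_fin,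
      ENNReal.ofReal_mul (by positivity), hvdef, ENNReal.ofReal_toReal measure_ball_lt_top.ne]
  have hpre : volume (ball c t) ^ (α / (n : ℝ)) * (volume (ball c t))⁻¹ ^ m
      = ENNReal.ofReal ((t ^ n * v) ^ (α / n - m)) := by
    rw [hvol, ENNReal.ofReal_rpow_of_pos hw, ← ENNReal.ofReal_inv_of_pos hw,
      ← ENNReal.ofReal_pow (by positivity), ← ENNReal.ofReal_mul (by positivity),
      Real.rpow_sub hw, Real.rpow_natCast, inv_pow]
    rfl
  rw [Finset.prod_mul_distrib, Finset.prod_const, Finset.card_univ, Fintype.card_fin, ← mul_assoc,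
    hpre, ← lintegral_pi_prod _ m _ hg, ← Measure.restrict_pi_pi, multIFracAbs,
    ← lintegral_const_mul' _ _ ENNReal.ofReal_ne_top,
    ← lintegral_const_mul' _ _ ENNReal.ofReal_ne_top]
  refine le_trans (lintegral_mono_ae ?_)
    (setLIntegral_le_lintegral (Set.univ.pi fun _ => ball c t) _)
  have hne : ∀ᵐ y : Fin m → EuclideanSpace ℝ (Fin n), y ≠ fun _ => x := by
    have : Nontrivial (EuclideanSpace ℝ (Fin n)) :=
      Module.nontrivial_of_finrank_pos (R := ℝ) (by simp; omega)
    have : NullSingletonClass (volume : Measure (EuclideanSpace ℝ (Fin n))) := inferInstance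
    have := Measure.pi_nullSingletonClass' (μ := fun _ : Fin m =>
      (volume : Measure (EuclideanSpace ℝ (Fin n))))
    rw [ae_iff]
    have h0 := measure_singleton (μ := Measure.pi fun _ : Fin m =>
      (volume : Measure (EuclideanSpace ℝ (Fin n)))) (fun _ => x)
    simp only [ne_eq, not_not]
    exact h0
  filter_upwards [ae_restrict_of_ae hne,
    ae_restrict_mem (MeasurableSet.univ_pi fun _ : Fin m => measurableSet_ball)] with y hy hyB
  have hs : 0 < ∑ i, dist x (y i) := by
    obtain ⟨i, hi⟩ := Function.ne_iff.mp hy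
    exact Finset.sum_pos' (fun _ _ => dist_nonneg) ⟨i, Finset.mem_univ _, dist_pos.2 (Ne.symm hi)⟩
  have hst : ∑ i, dist x (y i) ≤ 2 * m * t := by
    calc ∑ i, dist x (y i) ≤ ∑ _i : Fin m, 2 * t := by
          refine Finset.sum_le_sum fun i _ => ?_
          have h1 := mem_ball.1 hx
          have h2 := mem_ball.1 (hyB i (Set.mem_univ i))
          have h3 := dist_triangle_right x (y i) c
          linarith
      _ = 2 * m * t := by simp; ring
  have hk := kernel_lower_bound n m hn hm α v t _ hα.2 hv ht hs hst
  rw [mul_left_comm, ← ENNReal.ofReal_mul hCpos, mul_comm]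
  gcongr
end

section
/- Let n ≥ 1 and m ≥ 1 be integers, let 0 < α_i < n and 1 < p_i < n/α_i for i = 1,…,m, set α = α_1 + ⋯ + α_m, and define q by 1/q = 1/p_1 + ⋯ + 1/p_m − α/n, assuming 1/q < 1. Then there exists a constant C > 0 such that for all f_i ∈ L^{p_i}(ℝ^n), i = 1,…,m, one has ‖M_{α,m}(f_1,…,f_m)‖_{L^q(ℝ^n)} ≤ C ∏_{i=1}^m ‖f_i‖_{L^{p_i}(ℝ^n)}. -/
/-!
The argument is Hedberg's. Let `M` be the uncentered Hardy-Littlewood maximal operator. The average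
of `|fᵢ|` over a ball `B ∋ x` is at most `M fᵢ x`, and by Hölder it is at most
`|B| ^ (-1 / pᵢ) * ‖fᵢ‖`, the norm being that of `L^{pᵢ}`. Interpolating the two bounds
geometrically with `θᵢ = αᵢ pᵢ / n ∈ (0, 1)` cancels the factor `|B| ^ (αᵢ / n)`, so that
`M_{α,m} f x ≤ ∏ᵢ ‖fᵢ‖ ^ θᵢ * (M fᵢ x) ^ (1 - θᵢ)` (`avg_interp`).

With `wᵢ = q (1 / pᵢ - αᵢ / n)` one has `∑ᵢ wᵢ = 1` and `(1 - θᵢ) q = pᵢ wᵢ`. Hölder's inequality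
with weights `wᵢ` then bounds `∫ (M_{α,m} f) ^ q` by
`∏ᵢ ‖fᵢ‖ ^ (θᵢ q) * (∫ (M fᵢ) ^ pᵢ) ^ wᵢ`, and the `L^{pᵢ}` boundedness of `M` finishes the proof.

The boundedness of `M` on `L^p`, `p > 1`, is obtained from the weak `(1,1)` inequality
(`hlMax_weak`, by the Vitali covering lemma), truncation (`hlMax_weak_trunc`), and the layer cake
formula, used once for Lebesgue measure and once for the measure with density `|f|`
(`hlMax_strong`).
-/

open MeasureTheory Metric ENNReal

/-! ### The Hardy-Littlewood maximal operator -/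

/-- The uncentered Hardy-Littlewood maximal function of a nonnegative function `F`. -/
noncomputable def hlMax {n : ℕ} (F : EuclideanSpace ℝ (Fin n) → ℝ≥0∞)
    (x : EuclideanSpace ℝ (Fin n)) : ℝ≥0∞ :=
  ⨆ (c : EuclideanSpace ℝ (Fin n)) (t : ℝ) (_ : x ∈ ball c t),
    (volume (ball c t))⁻¹ * ∫⁻ y in ball c t, F y

lemma avg_le_hlMax {n : ℕ} (F : EuclideanSpace ℝ (Fin n) → ℝ≥0∞)
    {x c : EuclideanSpace ℝ (Fin n)} {t : ℝ} (h : x ∈ ball c t) :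
    (volume (ball c t))⁻¹ * ∫⁻ y in ball c t, F y ≤ hlMax F x :=
  le_iSup_of_le c (le_iSup_of_le t (le_iSup_of_le h le_rfl))

lemma lt_hlMax_iff {n : ℕ} (F : EuclideanSpace ℝ (Fin n) → ℝ≥0∞)
    (x : EuclideanSpace ℝ (Fin n)) (l : ℝ≥0∞) :
    l < hlMax F x ↔ ∃ c t, x ∈ ball c t ∧
      l < (volume (ball c t))⁻¹ * ∫⁻ y in ball c t, F y := by
  simp only [hlMax, lt_iSup_iff, exists_prop]

lemma isOpen_lt_hlMax {n : ℕ} (F : EuclideanSpace ℝ (Fin n) → ℝ≥0∞) (l : ℝ≥0∞) :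
    IsOpen {x | l < hlMax F x} := by
  rw [isOpen_iff_forall_mem_open]
  intro x hx
  obtain ⟨c, t, hxt, hl⟩ := (lt_hlMax_iff F x l).1 hx
  exact ⟨ball c t, fun y hy => (lt_hlMax_iff F y l).2 ⟨c, t, hy, hl⟩, isOpen_ball, hxt⟩

lemma measurable_hlMax {n : ℕ} (F : EuclideanSpace ℝ (Fin n) → ℝ≥0∞) :
    Measurable (hlMax F) :=
  measurable_of_Ioi fun l => (isOpen_lt_hlMax F l).measurableSet

/-- The weak type `(1,1)` inequality. -/
lemma hlMax_weak {n : ℕ} (F : EuclideanSpace ℝ (Fin n) → ℝ≥0∞) (l : ℝ≥0∞) :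
    volume {x | l < hlMax F x} * l ≤ ENNReal.ofReal (5 ^ n) * ∫⁻ y, F y := by
  rw [(isOpen_lt_hlMax F l).measure_eq_iSup_isCompact]
  simp only [ENNReal.iSup_mul]
  refine iSup_le fun K => iSup_le fun hKU => iSup_le fun hK => ?_
  let S : Set (EuclideanSpace ℝ (Fin n) × ℝ) :=
    {a | 0 < a.2 ∧ l * volume (ball a.1 a.2) ≤ ∫⁻ y in ball a.1 a.2, F y}
  have hcov : K ⊆ ⋃ a ∈ S, ball a.1 a.2 := by
    intro x hx
    obtain ⟨c, t, hxt, hl⟩ := (lt_hlMax_iff F x l).1 (hKU hx)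
    have ht : 0 < t := pos_of_mem_ball hxt
    refine Set.mem_biUnion (x := (c, t)) ⟨ht, ?_⟩ hxt
    have h0 : volume (ball c t) ≠ 0 := (measure_ball_pos volume c ht).ne'
    have h1 : volume (ball c t) ≠ ⊤ := measure_ball_lt_top.ne
    calc l * volume (ball c t)
        ≤ ((volume (ball c t))⁻¹ * ∫⁻ y in ball c t, F y) * volume (ball c t) := by gcongr
      _ = ((volume (ball c t))⁻¹ * volume (ball c t)) * ∫⁻ y in ball c t, F y := by ring
      _ = _ := by rw [ENNReal.inv_mul_cancel h0 h1, one_mul]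
  -- Passing to a finite subcover bounds the radii, as the covering lemma requires.
  obtain ⟨T, hTS, hTfin, hKT⟩ := hK.elim_finite_subcover_image (fun a _ => isOpen_ball) hcov
  obtain ⟨R, hR⟩ := (hTfin.image (fun a => a.2)).bddAbove
  obtain ⟨u, huT, hdis, hu⟩ := Vitali.exists_disjoint_subfamily_covering_enlargement_closedBall
    T (fun a => a.1) (fun a => a.2) R (fun a ha => hR (Set.mem_image_of_mem _ ha)) 5 (by norm_num)
  have hufin : u.Finite := hTfin.subset huT
  lift u to Finset (EuclideanSpace ℝ (Fin n) × ℝ) using hufin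
  have hK2 : K ⊆ ⋃ b ∈ u, closedBall b.1 (5 * b.2) := by
    intro x hx
    obtain ⟨a, ha, hxa⟩ := Set.mem_iUnion₂.1 (hKT hx)
    obtain ⟨b, hb, hab⟩ := hu a ha
    exact Set.mem_biUnion hb (hab (ball_subset_closedBall hxa))
  have hvol : ∀ b ∈ u, volume (closedBall b.1 (5 * b.2)) * l
      ≤ ENNReal.ofReal (5 ^ n) * ∫⁻ y in ball b.1 b.2, F y := by
    intro b hb
    obtain ⟨hb0, hbl⟩ := hTS (huT hb)
    rw [Measure.addHaar_closedBall_mul_of_pos _ _ (by norm_num), finrank_euclideanSpace_fin,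
      Measure.addHaar_closedBall _ _ hb0.le, ← Measure.addHaar_ball_of_pos _ b.1 hb0, mul_assoc,
      mul_comm _ l]
    gcongr
  calc volume K * l ≤ (∑ b ∈ u, volume (closedBall b.1 (5 * b.2))) * l := by
        gcongr
        exact (measure_mono hK2).trans (measure_biUnion_finset_le _ _)
    _ ≤ ∑ b ∈ u, ENNReal.ofReal (5 ^ n) * ∫⁻ y in ball b.1 b.2, F y := by
        rw [Finset.sum_mul]; exact Finset.sum_le_sum hvol
    _ = ENNReal.ofReal (5 ^ n) * ∫⁻ y in ⋃ b ∈ u, ball b.1 b.2, F y := by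
        rw [← Finset.mul_sum, lintegral_biUnion_finset
          (hdis.mono_on fun b _ => ball_subset_closedBall) (fun b _ => measurableSet_ball)]
    _ ≤ _ := by
        gcongr
        exact Measure.restrict_le_self

/-- The weak type inequality applied to the part of `g` above height `t / 2`; the part below it
contributes at most `t / 2` to the maximal function. -/
lemma hlMax_weak_trunc {n : ℕ} {g : EuclideanSpace ℝ (Fin n) → ℝ} (hg : Measurable g)
    {t : ℝ} (ht : 0 < t) :
    volume {x | ENNReal.ofReal t < hlMax (fun y => ENNReal.ofReal (g y)) x} * ENNReal.ofReal t ≤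
      ENNReal.ofReal (2 * 5 ^ n) *
        (volume.withDensity fun y => ENNReal.ofReal (g y)) {y | t < 2 * g y} := by
  set A : Set (EuclideanSpace ℝ (Fin n)) := {y | t < 2 * g y} with hA
  have hAm : MeasurableSet A := measurableSet_lt measurable_const (hg.const_mul 2)
  set G := A.indicator (fun y => ENNReal.ofReal (g y)) with hG
  have hle : ∀ y, ENNReal.ofReal (g y) ≤ G y + ENNReal.ofReal (t / 2) := by
    intro y
    by_cases hy : y ∈ A
    · rw [hG, Set.indicator_of_mem hy]; exact le_self_add
    · rw [hG, Set.indicator_of_notMem hy, zero_add]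
      apply ENNReal.ofReal_le_ofReal
      simp only [hA, Set.mem_ofPred_eq, not_lt] at hy
      linarith
  have hMle : ∀ x, hlMax (fun y => ENNReal.ofReal (g y)) x ≤
      hlMax G x + ENNReal.ofReal (t / 2) := by
    intro x
    refine iSup_le fun c => iSup_le fun s => iSup_le fun hx => ?_
    have h0 : volume (ball c s) ≠ 0 := (measure_ball_pos volume c (pos_of_mem_ball hx)).ne'
    have h1 : volume (ball c s) ≠ ⊤ := measure_ball_lt_top.ne
    calc (volume (ball c s))⁻¹ * ∫⁻ y in ball c s, ENNReal.ofReal (g y)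
        ≤ (volume (ball c s))⁻¹ * ∫⁻ y in ball c s, (G y + ENNReal.ofReal (t / 2)) := by
          gcongr with y; exact hle y
      _ = (volume (ball c s))⁻¹ * (∫⁻ y in ball c s, G y) + ENNReal.ofReal (t / 2) := by
          rw [lintegral_add_right _ measurable_const, setLIntegral_const, mul_add,
            mul_comm (ENNReal.ofReal (t / 2)), ← mul_assoc _ (volume _),
            ENNReal.inv_mul_cancel h0 h1, one_mul]
      _ ≤ _ := by gcongr; exact avg_le_hlMax G hx
  have hsub : {x | ENNReal.ofReal t < hlMax (fun y => ENNReal.ofReal (g y)) x} ⊆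
      {x | ENNReal.ofReal (t / 2) < hlMax G x} := by
    intro x hx
    simp only [Set.mem_ofPred_eq] at hx ⊢
    by_contra! hcon
    refine absurd (hx.trans_le (hMle x)) (not_lt.2 ?_)
    calc hlMax G x + ENNReal.ofReal (t / 2)
        ≤ ENNReal.ofReal (t / 2) + ENNReal.ofReal (t / 2) := by gcongr
      _ = ENNReal.ofReal t := by
        rw [← ENNReal.ofReal_add (by positivity) (by positivity), add_halves]
  have ht2 : ENNReal.ofReal t = 2 * ENNReal.ofReal (t / 2) := by
    rw [← ENNReal.ofReal_ofNat 2, ← ENNReal.ofReal_mul (by norm_num)]; congr 1; ring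
  calc _ ≤ volume {x | ENNReal.ofReal (t / 2) < hlMax G x} * ENNReal.ofReal t := by
        gcongr
    _ = 2 * (volume {x | ENNReal.ofReal (t / 2) < hlMax G x} * ENNReal.ofReal (t / 2)) := by
        rw [ht2]; ring
    _ ≤ 2 * (ENNReal.ofReal (5 ^ n) * ∫⁻ y, G y) := by
        exact mul_le_mul_right (hlMax_weak G _) _
    _ = _ := by
        rw [withDensity_apply _ hAm, hG, lintegral_indicator hAm, ENNReal.ofReal_mul (by norm_num),
          ENNReal.ofReal_ofNat, mul_assoc]

/-- The Hardy-Littlewood maximal theorem: boundedness on `L^p` for `p > 1`. -/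
lemma hlMax_strong (n : ℕ) {p : ℝ} (hp : 1 < p) :
    ∃ K : ℝ, 0 < K ∧ ∀ g : EuclideanSpace ℝ (Fin n) → ℝ, Measurable g → (∀ y, 0 ≤ g y) →
      (∫⁻ y, ENNReal.ofReal (g y ^ p)) < ⊤ →
      ∫⁻ x, hlMax (fun y => ENNReal.ofReal (g y)) x ^ p ≤
        ENNReal.ofReal K * ∫⁻ y, ENNReal.ofReal (g y ^ p) := by
  have hp1 : 0 < p - 1 := by linarith
  refine ⟨p * (2 * 5 ^ n) * (p - 1)⁻¹ * 2 ^ (p - 1), by positivity, ?_⟩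
  intro g hg hg0 hfin
  set F : EuclideanSpace ℝ (Fin n) → ℝ≥0∞ := fun y => ENNReal.ofReal (g y) with hF
  set ν := volume.withDensity F with hν
  have hFm : Measurable F := hg.ennreal_ofReal
  have h2gm : Measurable fun y => 2 * g y := hg.const_mul 2
  have hJ : ∫⁻ y, ENNReal.ofReal ((2 * g y) ^ (p - 1)) ∂ν =
      ENNReal.ofReal (2 ^ (p - 1)) * ∫⁻ y, ENNReal.ofReal (g y ^ p) := by
    rw [hν, lintegral_withDensity_eq_lintegral_mul _ hFm (by fun_prop),
      ← lintegral_const_mul _ (by fun_prop)]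
    refine lintegral_congr fun y => ?_
    simp only [Pi.mul_apply, hF]
    rw [← ENNReal.ofReal_mul (hg0 y), ← ENNReal.ofReal_mul (by positivity)]
    congr 1
    rw [Real.mul_rpow (by norm_num) (hg0 y)]
    have : g y ^ p = g y * g y ^ (p - 1) := by
      nth_rewrite 2 [← Real.rpow_one (g y)]
      rw [← Real.rpow_add' (hg0 y) (by linarith)]; congr 1; ring
    rw [this]; ring
  have hlc := lintegral_rpow_eq_lintegral_meas_lt_mul ν (f := fun y => 2 * g y)
    (Filter.Eventually.of_forall fun y => mul_nonneg (by norm_num) (hg0 y))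
    h2gm.aemeasurable hp1
  have hJfin : ∫⁻ y, ENNReal.ofReal ((2 * g y) ^ (p - 1)) ∂ν ≠ ⊤ := by
    rw [hJ]; exact ENNReal.mul_ne_top ENNReal.ofReal_ne_top hfin.ne
  -- By Markov, the truncated weak bound stays bounded for `t ≥ 1`, so `hlMax F` is finite a.e.
  have hae : ∀ᵐ x, hlMax F x ≠ ⊤ := by
    rw [ae_iff]
    simp only [not_not]
    have hD : ν {y | (1 : ℝ) < 2 * g y} ≠ ⊤ := by
      refine ne_top_of_le_ne_top hJfin ?_
      have := mul_meas_ge_le_lintegral (μ := ν)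
        (f := fun y => ENNReal.ofReal ((2 * g y) ^ (p - 1))) (by fun_prop) 1
      rw [one_mul] at this
      refine le_trans (measure_mono fun y hy => ?_) this
      simp only [Set.mem_ofPred_eq] at hy ⊢
      rw [ENNReal.one_le_ofReal]
      exact Real.one_le_rpow hy.le hp1.le
    by_contra hne
    obtain ⟨k, hk⟩ := ENNReal.exists_nat_mul_gt hne
      (ENNReal.mul_ne_top (ENNReal.ofReal_ne_top (r := 2 * 5 ^ n)) hD)
    refine absurd hk (not_lt.2 ?_)
    have h1 := hlMax_weak_trunc (n := n) hg (t := (k : ℝ) + 1) (by positivity)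
    calc (k : ℝ≥0∞) * volume {x | hlMax F x = ⊤}
        = volume {x | hlMax F x = ⊤} * ENNReal.ofReal (k : ℝ) := by
          rw [ENNReal.ofReal_natCast, mul_comm]
      _ ≤ volume {x | ENNReal.ofReal ((k : ℝ) + 1) < hlMax F x} *
          ENNReal.ofReal ((k : ℝ) + 1) := by
          gcongr
          · intro hx
            rw [hx]; exact ENNReal.ofReal_lt_top
          · linarith
      _ ≤ _ := h1
      _ ≤ _ := by
          refine mul_le_mul_right (measure_mono fun y hy => ?_) _
          simp only [Set.mem_ofPred_eq] at hy ⊢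
          have : (0 : ℝ) ≤ k := by positivity
          linarith
  have hMm := measurable_hlMax F
  calc ∫⁻ x, hlMax F x ^ p = ∫⁻ x, ENNReal.ofReal ((hlMax F x).toReal ^ p) := by
        refine lintegral_congr_ae (hae.mono fun x hx => ?_)
        simp only
        rw [← ENNReal.ofReal_rpow_of_nonneg ENNReal.toReal_nonneg (by linarith),
          ENNReal.ofReal_toReal hx]
    _ = ENNReal.ofReal p * ∫⁻ t in Set.Ioi (0 : ℝ),
          volume {x | t < (hlMax F x).toReal} * ENNReal.ofReal (t ^ (p - 1)) :=
        lintegral_rpow_eq_lintegral_meas_lt_mul _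
          (Filter.Eventually.of_forall fun x => ENNReal.toReal_nonneg)
          hMm.ennreal_toReal.aemeasurable (by linarith)
    _ ≤ ENNReal.ofReal p * ∫⁻ t in Set.Ioi (0 : ℝ), ENNReal.ofReal (2 * 5 ^ n) *
          (ν {y | t < 2 * g y} * ENNReal.ofReal (t ^ (p - 1 - 1))) := by
        refine mul_le_mul_right (setLIntegral_mono' measurableSet_Ioi fun t ht => ?_) _
        have ht : 0 < t := ht
        have hpow : t ^ (p - 1) = t * t ^ (p - 1 - 1) := by
          nth_rewrite 2 [← Real.rpow_one t]
          rw [← Real.rpow_add ht]; congr 1; ring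
        rw [hpow, ENNReal.ofReal_mul ht.le, ← mul_assoc, ← mul_assoc]
        refine mul_le_mul_left (le_trans ?_ (hlMax_weak_trunc hg ht)) _
        gcongr
        intro hx
        exact (ENNReal.ofReal_lt_iff_lt_toReal ht.le (by
          intro h; rw [h] at hx; simp at hx; linarith)).2 hx
    _ = ENNReal.ofReal p * ENNReal.ofReal (2 * 5 ^ n) * (ENNReal.ofReal (p - 1)⁻¹ *
          (ENNReal.ofReal (p - 1) * ∫⁻ t in Set.Ioi (0 : ℝ),
          (ν {y | t < 2 * g y} * ENNReal.ofReal (t ^ (p - 1 - 1))))) := by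
        rw [lintegral_const_mul' _ _ ENNReal.ofReal_ne_top, ← mul_assoc (ENNReal.ofReal (p - 1)⁻¹),
          ← ENNReal.ofReal_mul (q := p - 1) (by positivity), inv_mul_cancel₀ hp1.ne', ENNReal.ofReal_one,
          one_mul, mul_assoc]
    _ = _ := by
        rw [← hlc, hJ, ENNReal.ofReal_mul (p := p * (2 * 5 ^ n) * (p - 1)⁻¹) (by positivity),
          ENNReal.ofReal_mul (p := p * (2 * 5 ^ n)) (by positivity),
          ENNReal.ofReal_mul (p := p) (by positivity)]
        ring

/-! ### Hedberg's interpolation and the multilinear bound -/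

/-- Hedberg's inequality for one ball, with `θ = a p`, where `a` plays the role of `αᵢ / n`. -/
lemma avg_interp {n : ℕ} {F : EuclideanSpace ℝ (Fin n) → ℝ≥0∞} (hF : Measurable F)
    {p a : ℝ} (hp : 1 < p) (ha : 0 < a) (hap : a * p < 1)
    {x c : EuclideanSpace ℝ (Fin n)} {t : ℝ} (hx : x ∈ ball c t) :
    volume (ball c t) ^ a * ((volume (ball c t))⁻¹ * ∫⁻ y in ball c t, F y) ≤
      ((∫⁻ y, F y ^ p) ^ (1 / p)) ^ (a * p) * hlMax F x ^ (1 - a * p) := by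
  have hp0 : 0 < p := by linarith
  have h0 : volume (ball c t) ≠ 0 := (measure_ball_pos volume c (pos_of_mem_ball hx)).ne'
  have h1 : volume (ball c t) ≠ ⊤ := measure_ball_lt_top.ne
  have hM := avg_le_hlMax F hx
  set V := volume (ball c t) with hV
  set N := (∫⁻ y, F y ^ p) ^ (1 / p) with hN
  have hA : V⁻¹ * ∫⁻ y in ball c t, F y ≤ N * V ^ (-(1 / p)) := by
    have hc := Real.HolderConjugate.conjExponent hp
    have hh := ENNReal.lintegral_mul_le_Lp_mul_Lq (volume.restrict (ball c t)) hc
      (f := F) (g := fun _ => 1) hF.aemeasurable aemeasurable_const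
    simp only [Pi.mul_apply, mul_one, ENNReal.one_rpow, lintegral_const, one_mul,
      Measure.restrict_apply MeasurableSet.univ, Set.univ_inter] at hh
    have hq : 1 / p.conjExponent = 1 - 1 / p := by
      have := hc.inv_add_inv_eq_one
      simp only [one_div]; linarith
    rw [hq, ← hV] at hh
    calc V⁻¹ * ∫⁻ y in ball c t, F y
        ≤ V⁻¹ * (N * V ^ (1 - 1 / p)) := by
          gcongr
          refine hh.trans ?_
          rw [hN]
          gcongr
          exact Measure.restrict_le_self
      _ = N * V ^ (-(1 / p)) := by
          rw [← ENNReal.rpow_neg_one, mul_left_comm, ← ENNReal.rpow_add _ _ h0 h1]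
          congr 2; ring
  set A := V⁻¹ * ∫⁻ y in ball c t, F y with hAdef
  have hθ : 0 ≤ a * p := by positivity
  calc V ^ a * A = V ^ a * (A ^ (a * p) * A ^ (1 - a * p)) := by
        rw [← ENNReal.rpow_add_of_nonneg _ _ hθ (by linarith)]
        simp
    _ ≤ V ^ a * ((N * V ^ (-(1 / p))) ^ (a * p) * hlMax F x ^ (1 - a * p)) := by
        have : 0 ≤ 1 - a * p := by linarith
        gcongr
    _ = (V ^ a * V ^ (-a)) * (N ^ (a * p) * hlMax F x ^ (1 - a * p)) := by
        rw [ENNReal.mul_rpow_of_nonneg _ _ hθ, ← ENNReal.rpow_mul V]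
        have : -(1 / p) * (a * p) = -a := by field_simp
        rw [this]; ring
    _ = _ := by
        rw [← ENNReal.rpow_add _ _ h0 h1]; simp

theorem stmt7 (n m : ℕ) (hn : 1 ≤ n) (hm : 1 ≤ m)
    (α p : Fin m → ℝ) (hα : ∀ i, 0 < α i ∧ α i < (n : ℝ))
    (hp : ∀ i, 1 < p i ∧ p i < (n : ℝ) / α i)
    (q : ℝ) (hq : 1 / q = (∑ i, 1 / p i) - (∑ i, α i) / (n : ℝ)) (hq1 : 1 / q < 1) :
    ∃ C > (0 : ℝ), ∀ f : Fin m → EuclideanSpace ℝ (Fin n) → ℝ,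
      (∀ i, Measurable (f i)) →
      (∀ i, (∫⁻ y, ENNReal.ofReal (|f i y| ^ p i)) < ⊤) →
      (∫⁻ y, (multMFrac n m (∑ i, α i) f y) ^ q) ^ (1 / q) ≤
        ENNReal.ofReal C * ∏ i, (∫⁻ y, ENNReal.ofReal (|f i y| ^ p i)) ^ (1 / p i) := by
  have hn0 : (0 : ℝ) < n := by exact_mod_cast hn
  have hp0 : ∀ i, 0 < p i := fun i => by linarith [(hp i).1]
  have ha : ∀ i, 0 < α i / n := fun i => div_pos (hα i).1 hn0
  have hap : ∀ i, α i / n * p i < 1 := fun i => by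
    have := (lt_div_iff₀ (hα i).1).1 (hp i).2
    rw [div_mul_eq_mul_div, div_lt_one hn0]; linarith
  have hr : ∀ i, 0 < 1 / p i - α i / n := fun i => by
    rw [sub_pos, lt_div_iff₀ (hp0 i)]; exact hap i
  have hqs : 1 / q = ∑ i, (1 / p i - α i / n) := by
    rw [hq, Finset.sum_sub_distrib, Finset.sum_div]
  have hq0 : 0 < q := by
    rw [← one_div_pos, hqs]
    have : Nonempty (Fin m) := ⟨⟨0, hm⟩⟩
    exact Finset.sum_pos (fun i _ => hr i) Finset.univ_nonempty
  let w : Fin m → ℝ := fun i => q * (1 / p i - α i / n)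
  have hw0 : ∀ i, 0 < w i := fun i => mul_pos hq0 (hr i)
  have hw1 : ∑ i, w i = 1 := by
    simp only [w]
    rw [← Finset.mul_sum, ← hqs, mul_one_div_cancel hq0.ne']
  have hwp : ∀ i, (1 - α i / n * p i) * q = p i * w i := fun i => by
    have := (hp0 i).ne'
    simp only [w]; field_simp
  choose K hK0 hK using fun i => hlMax_strong n (hp i).1
  refine ⟨∏ i, K i ^ (w i / q), Finset.prod_pos fun i _ => Real.rpow_pos_of_pos (hK0 i) _, ?_⟩
  intro f hf hfin
  let F : Fin m → EuclideanSpace ℝ (Fin n) → ℝ≥0∞ := fun i y => ENNReal.ofReal |f i y|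
  have hFm : ∀ i, Measurable (F i) := fun i => by
    have := hf i
    simp only [F]; fun_prop
  let I : Fin m → ℝ≥0∞ := fun i => ∫⁻ y, ENNReal.ofReal (|f i y| ^ p i)
  let N : Fin m → ℝ≥0∞ := fun i => I i ^ (1 / p i)
  have hFI : ∀ i, ∫⁻ y, F i y ^ p i = I i := fun i =>
    lintegral_congr fun y => ENNReal.ofReal_rpow_of_nonneg (abs_nonneg _) (hp0 i).le
  have hIN : ∀ i, I i = N i ^ p i := fun i => by
    simp only [N]
    rw [← ENNReal.rpow_mul, one_div_mul_cancel (hp0 i).ne', ENNReal.rpow_one]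
  have hNtop : ∀ i, N i ≠ ⊤ := fun i =>
    ENNReal.rpow_ne_top_of_nonneg (one_div_pos.2 (hp0 i)).le (hfin i).ne
  have hpt : ∀ x, multMFrac n m (∑ i, α i) f x ≤
      ∏ i, (N i ^ (α i / n * p i) * hlMax (F i) x ^ (1 - α i / n * p i)) := by
    intro x
    refine iSup_le fun c => iSup_le fun t => iSup_le fun hx => ?_
    have h0 : volume (ball c t) ≠ 0 := (measure_ball_pos volume c (pos_of_mem_ball hx)).ne'
    have h1 : volume (ball c t) ≠ ⊤ := measure_ball_lt_top.ne
    have hV : volume (ball c t) ^ ((∑ i, α i) / (n : ℝ)) =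
        ∏ i, volume (ball c t) ^ (α i / (n : ℝ)) := by
      rw [Finset.sum_div]
      generalize (Finset.univ : Finset (Fin m)) = s
      induction s using Finset.induction_on with
      | empty => simp
      | insert i s hi ih =>
        rw [Finset.sum_insert hi, Finset.prod_insert hi, ENNReal.rpow_add _ _ h0 h1, ih]
    rw [hV, ← Finset.prod_mul_distrib]
    refine Finset.prod_le_prod' fun i _ => ?_
    have := avg_interp (hFm i) (hp i).1 (ha i) (hap i) hx
    rw [hFI i] at this
    exact this
  have hmain : ∫⁻ x, multMFrac n m (∑ i, α i) f x ^ q ≤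
      ∏ i, (ENNReal.ofReal (K i) ^ w i * N i ^ q) := by
    calc ∫⁻ x, multMFrac n m (∑ i, α i) f x ^ q
        ≤ ∫⁻ x, (∏ i, N i ^ (α i / n * p i * q)) * ∏ i, (hlMax (F i) x ^ p i) ^ w i := by
          refine lintegral_mono fun x => ?_
          refine (ENNReal.rpow_le_rpow (hpt x) hq0.le).trans_eq ?_
          rw [← ENNReal.prod_rpow_of_nonneg hq0.le, ← Finset.prod_mul_distrib]
          refine Finset.prod_congr rfl fun i _ => ?_
          rw [ENNReal.mul_rpow_of_nonneg _ _ hq0.le, ← ENNReal.rpow_mul (N i),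
            ← ENNReal.rpow_mul (hlMax (F i) x), ← ENNReal.rpow_mul (hlMax (F i) x), hwp i]
      _ = (∏ i, N i ^ (α i / n * p i * q)) * ∫⁻ x, ∏ i, (hlMax (F i) x ^ p i) ^ w i := by
          refine lintegral_const_mul' _ _ (ENNReal.prod_ne_top fun i _ => ?_)
          exact ENNReal.rpow_ne_top_of_nonneg
            (mul_pos (mul_pos (ha i) (hp0 i)) hq0).le (hNtop i)
      _ ≤ (∏ i, N i ^ (α i / n * p i * q)) * ∏ i, (∫⁻ x, hlMax (F i) x ^ p i) ^ w i := by
          gcongr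
          exact ENNReal.lintegral_prod_norm_pow_le _
            (fun i _ => ((measurable_hlMax (F i)).pow_const _).aemeasurable) hw1
            (fun i _ => (hw0 i).le)
      _ ≤ (∏ i, N i ^ (α i / n * p i * q)) * ∏ i, (ENNReal.ofReal (K i) * N i ^ p i) ^ w i := by
          refine mul_le_mul_right (Finset.prod_le_prod' fun i _ => ?_) _
          refine ENNReal.rpow_le_rpow ?_ (hw0 i).le
          rw [← hIN i]
          exact hK i (fun y => |f i y|) (hf i).abs (fun y => abs_nonneg _) (hfin i)
      _ = _ := by
          rw [← Finset.prod_mul_distrib]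
          refine Finset.prod_congr rfl fun i _ => ?_
          rw [ENNReal.mul_rpow_of_nonneg _ _ (hw0 i).le, ← ENNReal.rpow_mul (N i), mul_left_comm,
            ← ENNReal.rpow_add_of_nonneg _ _ (mul_pos (mul_pos (ha i) (hp0 i)) hq0).le
              (mul_pos (hp0 i) (hw0 i)).le, ← hwp i]
          congr 2; ring
  refine (ENNReal.rpow_le_rpow hmain (one_div_pos.2 hq0).le).trans_eq ?_
  rw [← ENNReal.prod_rpow_of_nonneg (one_div_pos.2 hq0).le,
    ENNReal.ofReal_prod_of_nonneg fun i _ => (Real.rpow_pos_of_pos (hK0 i) _).le,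
    ← Finset.prod_mul_distrib]
  refine Finset.prod_congr rfl fun i _ => ?_
  rw [ENNReal.mul_rpow_of_nonneg _ _ (one_div_pos.2 hq0).le, ← ENNReal.rpow_mul,
    ← ENNReal.rpow_mul (N i), mul_one_div_cancel hq0.ne', ENNReal.rpow_one, mul_one_div,
    ENNReal.ofReal_rpow_of_pos (hK0 i)]
end

section
/- Let v_1 and v_2 be nonnegative measurable functions on (0,∞) satisfying 0 < ‖v_1‖_{L^∞(t,∞)} < ∞ and 0 < ‖v_2‖_{L^∞(0,t)} < ∞ for every t ∈ (0,∞), and let u be a continuous nonnegative function on (0,∞). Define the supremal operator S̄_u by (S̄_u g)(t) = esssup_{t<s<∞} u(s)|g(s)| for t ∈ (0,∞). Then there exists a constant C > 0 such that esssup_{t>0} v_2(t) (S̄_u g)(t) ≤ C · esssup_{t>0} v_1(t) g(t) for every nonnegative nondecreasing function g on (0,∞) with lim_{t→0⁺} g(t) = 0, if and only if esssup_{t>0} v_2(t) · esssup_{t<s<∞} u(s) ‖v_1‖_{L^∞(s,∞)}^{-1} < ∞. -/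
/-!
Write `V s = ‖v₁‖_{L^∞(s,∞)}`, a nonincreasing function with values in `(0,∞)` on `(0,∞)`.

Sufficiency: if `g` is nondecreasing and `M = esssup v₁ g`, then `g s * v₁ t ≤ v₁ t * g t ≤ M` for
a.e. `t > s`, so `g s * V s ≤ M`, that is `g s ≤ M / V s` (`ofReal_mul_essLinfty_le`). Inserting this
pointwise bound in `S̄_u g` gives the inequality, with the finite quantity of the criterion as constant.

Necessity: test the inequality with the truncations `g = χ_{(a,∞)} / V`, which are admissible for
every `a > 0`. Since `v₁ ≤ V` almost everywhere (`ae_le_essLinfty_Ioi`), `esssup v₁ g ≤ 1`. Moreover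
`S̄_u g t = esssup_{s>t} u s / V s` whenever `t ≥ a`, so letting `a = 1/(n+1)` tend to `0` bounds the
quantity of the criterion by `C`.
-/

open MeasureTheory ENNReal Filter

/-- `‖v‖_{L^∞(S)} = esssup_{t ∈ S} |v(t)|` (with respect to Lebesgue measure). -/
noncomputable def essLinfty (v : ℝ → ℝ) (S : Set ℝ) : ℝ≥0∞ :=
  essSup (fun t => ENNReal.ofReal |v t|) (volume.restrict S)

/-- The supremal operator `(S̄_u g)(t) = esssup_{t<s<∞} u(s) |g(s)|`. -/
noncomputable def supOp (u g : ℝ → ℝ) (t : ℝ) : ℝ≥0∞ :=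
  essSup (fun s => ENNReal.ofReal (u s * |g s|)) (volume.restrict (Set.Ioi t))

lemma antitone_essLinfty_Ioi (v : ℝ → ℝ) : Antitone fun s => essLinfty v (Set.Ioi s) := by
  intro s t hst
  exact essSup_mono_measure
    (Measure.restrict_mono (Set.Ioi_subset_Ioi hst) le_rfl).absolutelyContinuous

/-- The bound `|v t| ≤ V r` holds for a.e. `t > r`, hence off a null set for all rational `r < t`
simultaneously. It passes to `r = t` at the continuity points of the antitone function
`V s = ‖v‖_{L^∞(s,∞)}`, that is for all but countably many `t`. -/
lemma ae_le_essLinfty_Ioi (v : ℝ → ℝ) :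
    ∀ᵐ t, ENNReal.ofReal |v t| ≤ essLinfty v (Set.Ioi t) := by
  have h1 : ∀ᵐ t, ∀ r : ℚ, (r : ℝ) < t →
      ENNReal.ofReal |v t| ≤ essLinfty v (Set.Ioi (r : ℝ)) := by
    rw [ae_all_iff]
    intro r
    exact (ae_restrict_iff' measurableSet_Ioi).1
      (_root_.ae_le_essSup (μ := volume.restrict (Set.Ioi (r : ℝ))) (f := fun t => ENNReal.ofReal |v t|))
  have h2 : ∀ᵐ t, ContinuousAt (fun s => essLinfty v (Set.Ioi s)) t :=
    (antitone_essLinfty_Ioi v).countable_not_continuousAt.measure_zero volume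
  filter_upwards [h1, h2] with t ht hc
  by_contra! hlt
  have hev : ∀ᶠ s in nhdsWithin t (Set.Iio t),
      essLinfty v (Set.Ioi s) < ENNReal.ofReal |v t| :=
    (hc.eventually_lt_const hlt).filter_mono nhdsWithin_le_nhds
  obtain ⟨l, hl, hsub⟩ := mem_nhdsLT_iff_exists_Ioo_subset.1 hev
  obtain ⟨r, hlr, hrt⟩ := exists_rat_btwn (Set.mem_Iio.1 hl)
  exact absurd (ht r hrt) (not_le.2 (hsub ⟨hlr, hrt⟩))

lemma ofReal_mul_essLinfty_le (v g : ℝ → ℝ) (hv : ∀ t ∈ Set.Ioi (0 : ℝ), 0 ≤ v t)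
    (hgm : MonotoneOn g (Set.Ioi 0)) {s : ℝ} (hs : 0 < s) :
    ENNReal.ofReal (g s) * essLinfty v (Set.Ioi s) ≤
      essSup (fun t => ENNReal.ofReal (v t * g t)) (volume.restrict (Set.Ioi 0)) := by
  rw [essLinfty, ← ENNReal.essSup_const_mul]
  refine essSup_le_of_ae_le _ ?_
  have h := ae_restrict_of_ae_restrict_of_subset (Set.Ioi_subset_Ioi hs.le)
    (_root_.ae_le_essSup (μ := volume.restrict (Set.Ioi (0 : ℝ)))
      (f := fun t => ENNReal.ofReal (v t * g t)))
  filter_upwards [h, ae_restrict_mem measurableSet_Ioi] with t ht hst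
  have ht0 : 0 < t := hs.trans hst
  refine le_trans ?_ ht
  rw [abs_of_nonneg (hv t ht0), ENNReal.ofReal_mul (hv t ht0), mul_comm]
  gcongr
  exact hgm hs ht0 (le_of_lt hst)

theorem stmt9 (v₁ v₂ u : ℝ → ℝ)
    (hv₁m : Measurable v₁) (hv₂m : Measurable v₂)
    (hv₁nn : ∀ t ∈ Set.Ioi (0 : ℝ), 0 ≤ v₁ t)
    (hv₂nn : ∀ t ∈ Set.Ioi (0 : ℝ), 0 ≤ v₂ t)
    (hv₁ : ∀ t : ℝ, 0 < t →
      0 < essLinfty v₁ (Set.Ioi t) ∧ essLinfty v₁ (Set.Ioi t) < ⊤)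
    (hv₂ : ∀ t : ℝ, 0 < t →
      0 < essLinfty v₂ (Set.Ioo 0 t) ∧ essLinfty v₂ (Set.Ioo 0 t) < ⊤)
    (hu : ContinuousOn u (Set.Ioi 0)) (hunn : ∀ t ∈ Set.Ioi (0 : ℝ), 0 ≤ u t) :
    (∃ C > (0 : ℝ), ∀ g : ℝ → ℝ,
        (∀ t ∈ Set.Ioi (0 : ℝ), 0 ≤ g t) → MonotoneOn g (Set.Ioi 0) →
        Tendsto g (nhdsWithin 0 (Set.Ioi 0)) (nhds 0) →
        essSup (fun t => ENNReal.ofReal (v₂ t) * supOp u g t)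
            (volume.restrict (Set.Ioi 0)) ≤
          ENNReal.ofReal C *
            essSup (fun t => ENNReal.ofReal (v₁ t * g t))
              (volume.restrict (Set.Ioi 0))) ↔
    essSup (fun t => ENNReal.ofReal (v₂ t) *
        essSup (fun s => ENNReal.ofReal (u s) * (essLinfty v₁ (Set.Ioi s))⁻¹)
          (volume.restrict (Set.Ioi t)))
      (volume.restrict (Set.Ioi 0)) < ⊤ := by
  constructor
  · rintro ⟨C, -, hC⟩
    refine lt_of_le_of_lt ?_ (ENNReal.ofReal_lt_top (r := C))
    refine essSup_le_of_ae_le _ ?_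
    set V : ℝ → ℝ≥0∞ := fun s => essLinfty v₁ (Set.Ioi s) with hV
    have hVanti : Antitone V := antitone_essLinfty_Ioi v₁
    have hVinv : ∀ s, 0 < s → (V s)⁻¹ ≠ ⊤ := fun s hs => ENNReal.inv_ne_top.2 (hv₁ s hs).1.ne'
    have key : ∀ a : ℝ, 0 < a → ∀ᵐ t ∂(volume.restrict (Set.Ioi (0 : ℝ))), a ≤ t →
        ENNReal.ofReal (v₂ t) *
          essSup (fun s => ENNReal.ofReal (u s) * (V s)⁻¹) (volume.restrict (Set.Ioi t))
            ≤ ENNReal.ofReal C := by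
      intro a ha
      set g : ℝ → ℝ := fun s => if a < s then (V s)⁻¹.toReal else 0 with hg
      have hg0 : ∀ t, 0 ≤ g t := by
        intro t
        simp only [hg]
        split_ifs
        · exact ENNReal.toReal_nonneg
        · exact le_rfl
      have hgm : MonotoneOn g (Set.Ioi 0) := by
        intro x _ y hy hxy
        by_cases hx : a < x
        · have hay : a < y := hx.trans_le hxy
          simp only [hg, hx, hay, if_true]
          exact ENNReal.toReal_mono (hVinv y hy) (ENNReal.inv_le_inv.2 (hVanti hxy))
        · have : g x = 0 := by simp [hg, hx]
          rw [this]
          exact hg0 y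
      have hgt : Tendsto g (nhdsWithin 0 (Set.Ioi 0)) (nhds 0) := by
        refine tendsto_const_nhds.congr' ?_
        filter_upwards [nhdsWithin_le_nhds (Iio_mem_nhds ha)] with t ht
        have : ¬ a < t := not_lt.2 (le_of_lt ht)
        simp [hg, this]
      have hle1 : essSup (fun t => ENNReal.ofReal (v₁ t * g t))
          (volume.restrict (Set.Ioi 0)) ≤ 1 := by
        refine essSup_le_of_ae_le _ ?_
        filter_upwards [ae_restrict_of_ae (ae_le_essLinfty_Ioi v₁),
          ae_restrict_mem measurableSet_Ioi] with t ht ht0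
        rw [abs_of_nonneg (hv₁nn t ht0)] at ht
        rw [ENNReal.ofReal_mul (hv₁nn t ht0)]
        by_cases hat : a < t
        · simp only [hg, hat, if_true, ENNReal.ofReal_toReal (hVinv t ht0)]
          calc ENNReal.ofReal (v₁ t) * (V t)⁻¹ ≤ V t * (V t)⁻¹ := by gcongr
            _ ≤ 1 := ENNReal.mul_inv_le_one _
        · simp [hg, hat]
      have hmain := (hC g (fun t _ => hg0 t) hgm hgt).trans
        (mul_le_of_le_one_right' hle1)
      filter_upwards [_root_.ae_le_essSup (μ := volume.restrict (Set.Ioi (0 : ℝ)))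
        (f := fun t => ENNReal.ofReal (v₂ t) * supOp u g t)] with t ht hat
      refine le_trans (le_of_eq ?_) (ht.trans hmain)
      congr 1
      refine essSup_congr_ae ?_
      filter_upwards [ae_restrict_mem measurableSet_Ioi] with s hs
      have has : a < s := lt_of_le_of_lt hat hs
      rw [abs_of_nonneg (hg0 s), ENNReal.ofReal_mul (hunn s (ha.trans has))]
      simp only [hg, has, if_true, ENNReal.ofReal_toReal (hVinv s (ha.trans has))]
    have hall := ae_all_iff.2 fun n : ℕ => key (1 / ((n : ℝ) + 1)) Nat.one_div_pos_of_nat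
    filter_upwards [hall, ae_restrict_mem measurableSet_Ioi] with t ht ht0
    obtain ⟨n, hn⟩ := exists_nat_one_div_lt (show (0 : ℝ) < t from ht0)
    exact ht n hn.le
  · intro hK
    set K := essSup (fun t => ENNReal.ofReal (v₂ t) *
        essSup (fun s => ENNReal.ofReal (u s) * (essLinfty v₁ (Set.Ioi s))⁻¹)
          (volume.restrict (Set.Ioi t)))
      (volume.restrict (Set.Ioi 0)) with hKdef
    -- The constant must be positive, whereas `K` may vanish; hence `K + 1`.
    refine ⟨K.toReal + 1, by positivity, fun g hg0 hgm _ => ?_⟩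
    set M := essSup (fun t => ENNReal.ofReal (v₁ t * g t)) (volume.restrict (Set.Ioi 0)) with hM
    have hKC : K ≤ ENNReal.ofReal (K.toReal + 1) := by
      rw [← ENNReal.ofReal_toReal hK.ne]
      exact ENNReal.ofReal_le_ofReal (by simp)
    refine le_trans ?_ (mul_le_mul_left hKC M)
    refine essSup_le_of_ae_le _ ?_
    filter_upwards [_root_.ae_le_essSup (μ := volume.restrict (Set.Ioi (0 : ℝ)))
        (f := fun t => ENNReal.ofReal (v₂ t) *
          essSup (fun s => ENNReal.ofReal (u s) * (essLinfty v₁ (Set.Ioi s))⁻¹)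
            (volume.restrict (Set.Ioi t))),
      ae_restrict_mem measurableSet_Ioi] with t ht ht0
    have hsup : supOp u g t ≤
        M * essSup (fun s => ENNReal.ofReal (u s) * (essLinfty v₁ (Set.Ioi s))⁻¹)
            (volume.restrict (Set.Ioi t)) := by
      rw [supOp, ← ENNReal.essSup_const_mul]
      refine essSup_mono_ae ?_
      filter_upwards [ae_restrict_mem measurableSet_Ioi] with s hs
      have hs0 : 0 < s := lt_trans ht0 hs
      have hb := ofReal_mul_essLinfty_le v₁ g hv₁nn hgm hs0
      rw [← ENNReal.le_div_iff_mul_le (Or.inl (hv₁ s hs0).1.ne') (Or.inl (hv₁ s hs0).2.ne)] at hb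
      rw [abs_of_nonneg (hg0 s hs0), ENNReal.ofReal_mul (hunn s hs0)]
      calc ENNReal.ofReal (u s) * ENNReal.ofReal (g s)
          ≤ ENNReal.ofReal (u s) * (M / essLinfty v₁ (Set.Ioi s)) := by gcongr
        _ = M * (ENNReal.ofReal (u s) * (essLinfty v₁ (Set.Ioi s))⁻¹) := by
          rw [div_eq_mul_inv, mul_left_comm]
    calc ENNReal.ofReal (v₂ t) * supOp u g t
        ≤ ENNReal.ofReal (v₂ t) * (M * essSup (fun s => ENNReal.ofReal (u s) *
            (essLinfty v₁ (Set.Ioi s))⁻¹) (volume.restrict (Set.Ioi t))) := by gcongr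
      _ = (ENNReal.ofReal (v₂ t) * essSup (fun s => ENNReal.ofReal (u s) *
            (essLinfty v₁ (Set.Ioi s))⁻¹) (volume.restrict (Set.Ioi t))) * M := by ring
      _ ≤ K * M := by gcongr
end
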